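/- arXiv:1307.6708 — 3 statements merged into one kernel-verified Lean document; each statement's English description precedes it below -/
import Mathlib

section
/- Let G be a finite simple graph with no isolated vertices, let c₄(G) be the number of subgraphs of G isomorphic to the 4-cycle C₄ and k₄(G) the number of subgraphs isomorphic to the complete graph K₄. Then the edge polytope P(G) has f₀(P(G)) = e(G) vertices and f₁(P(G)) = C(e(G),2) − 2·c₄(G) + 3·k₄(G) edges. -/
open Set

/-- The edge polytope of a graph `G` on the vertex set `Fin n`. -/
def edgePolytope {n : ℕ} (G : SimpleGraph (Fin n)) : Set (Fin n → ℝ) :=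
  convexHull ℝ {x | ∃ i j : Fin n, G.Adj i j ∧ x = Pi.single i 1 + Pi.single j 1}

/-- The dimension of a polytope: the dimension of its affine hull. -/
noncomputable def polyDim {n : ℕ} (P : Set (Fin n → ℝ)) : ℕ :=
  Module.finrank ℝ (vectorSpan ℝ P)

/-- `faceCount P k` is the number of (nonempty) `k`-dimensional faces of `P`,
a face being the intersection of `P` with a supporting hyperplane (`IsExposed`). -/
noncomputable def faceCount {n : ℕ} (P : Set (Fin n → ℝ)) (k : ℕ) : ℕ :=
  {F : Set (Fin n → ℝ) | IsExposed ℝ P F ∧ F.Nonempty ∧ polyDim F = k}.ncard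

/-- The number of subgraphs of `G` isomorphic to a fixed graph `F`. -/
noncomputable def copyCount {n m : ℕ} (G : SimpleGraph (Fin n))
    (F : SimpleGraph (Fin m)) : ℕ :=
  Nat.card {H : G.Subgraph // Nonempty (H.coe ≃g F)}

/-!
A face of a convex hull is the convex hull of the generators on it, so the faces of `P(G)` are given
by exposed sets of edge vectors `e_i + e_j`. Suitable vertex weights expose every single edge
vector, and every pair of edge vectors except those of two opposite edges `ab`, `cd` of a 4-cycle
`abcd`: there `(e_a + e_b) + (e_c + e_d) = (e_b + e_c) + (e_d + e_a)`, so a face containing the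
first two vectors contains the others. Hence `f₁` is `C(e(G), 2)` minus the number `N` of pairs of
opposite edges of 4-cycles.

Two disjoint edges lie in exactly two 4-cycles of the complete graph on their endpoints, and the
union of these two cycles is that complete graph. Inclusion-exclusion over the two cycles, on
labelled copies, gives `8 N = 8 c₄ + 8 c₄ - 24 k₄`, the coefficients being the numbers of
automorphisms of two disjoint edges, of `C₄` and of `K₄`.
-/

section Extreme

variable {𝕜 E : Type*} [Field 𝕜] [LinearOrder 𝕜] [IsStrictOrderedRing 𝕜] [AddCommGroup E]
  [Module 𝕜 E] {S F : Set E}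

lemma convexHull_inter_eq_of_isExtreme (hF : IsExtreme 𝕜 (convexHull 𝕜 S) F)
    (hconv : Convex 𝕜 F) : convexHull 𝕜 (S ∩ F) = F := by
  refine (convexHull_min inter_subset_right hconv).antisymm fun x hx ↦ ?_
  suffices h : convexHull 𝕜 S ⊆ {x ∈ convexHull 𝕜 S | x ∈ F → x ∈ convexHull 𝕜 (S ∩ F)} from
    (h (hF.subset hx)).2 hx
  refine convexHull_min (fun x hx ↦ ⟨subset_convexHull 𝕜 S hx,
    fun hxF ↦ subset_convexHull 𝕜 _ ⟨hx, hxF⟩⟩) (convex_iff_openSegment_subset.2 ?_)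
  rintro x ⟨hx, hxF⟩ y ⟨hy, hyF⟩ z hz
  refine ⟨(convex_convexHull 𝕜 S).openSegment_subset hx hy hz, fun hzF ↦ ?_⟩
  exact (convex_convexHull 𝕜 _).openSegment_subset
    (hxF (hF.left_mem_of_mem_openSegment hx hy hzF hz))
    (hyF (hF.right_mem_of_mem_openSegment hx hy hzF hz)) hz

lemma eq_or_eq_of_wbtw_of_convexIndependent (hS : ConvexIndependent 𝕜 ((↑) : S → E)) {x y z : E}
    (hx : x ∈ S) (hy : y ∈ S) (hz : z ∈ S) (h : Wbtw 𝕜 x y z) : y = x ∨ y = z := by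
  rw [← mem_segment_iff_wbtw, ← convexHull_pair] at h
  exact convexIndependent_set_iff_inter_convexHull_subset.1 hS {x, z} (pair_subset hx hz) ⟨hy, h⟩

lemma eq_pair_of_collinear_of_convexIndependent (hS : ConvexIndependent 𝕜 ((↑) : S → E))
    (hcol : Collinear 𝕜 S) {x y : E} (hx : x ∈ S) (hy : y ∈ S) (hxy : x ≠ y) : S = {x, y} := by
  refine (pair_subset hx hy).antisymm' fun z hz ↦ ?_
  have hxyz : Collinear 𝕜 {x, y, z} :=
    hcol.subset (insert_subset hx (pair_subset hy hz))
  rcases hxyz.wbtw_or_wbtw_or_wbtw with h | h | h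
  · have := eq_or_eq_of_wbtw_of_convexIndependent hS hx hy hz h
    grind
  · have := eq_or_eq_of_wbtw_of_convexIndependent hS hy hz hx h
    grind
  · have := eq_or_eq_of_wbtw_of_convexIndependent hS hz hx hy h
    grind

end Extreme

section Exposed

variable {E : Type*} [AddCommGroup E] [Module ℝ E] [TopologicalSpace E] {S T F : Set E}

lemma inter_toExposed_convexHull (l : StrongDual ℝ E) (S : Set E) :
    S ∩ l.toExposed (convexHull ℝ S) = l.toExposed S := by
  ext x
  refine ⟨fun ⟨hxS, _, hx⟩ ↦ ⟨hxS, fun y hy ↦ hx y (subset_convexHull ℝ S hy)⟩,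
    fun ⟨hxS, hx⟩ ↦ ⟨hxS, subset_convexHull ℝ S hxS, ?_⟩⟩
  exact convexHull_min hx (convex_halfSpace_le l.isLinear (l x))

lemma convexHull_toExposed (l : StrongDual ℝ E) (S : Set E) :
    convexHull ℝ (l.toExposed S) = l.toExposed (convexHull ℝ S) := by
  have h : IsExposed ℝ (convexHull ℝ S) (l.toExposed (convexHull ℝ S)) :=
    ContinuousLinearMap.toExposed.isExposed
  rw [← inter_toExposed_convexHull]
  exact convexHull_inter_eq_of_isExtreme h.isExtreme (h.convex (convex_convexHull ℝ S))

lemma isExposed_convexHull_convexHull (hT : IsExposed ℝ S T) :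
    IsExposed ℝ (convexHull ℝ S) (convexHull ℝ T) := by
  intro hne
  obtain ⟨l, rfl⟩ := hT (convexHull_nonempty_iff.1 hne)
  exact ⟨l, convexHull_toExposed l S⟩

lemma bijOn_convexHull_isExposed (S : Set E) :
    BijOn (convexHull ℝ) {T | IsExposed ℝ S T ∧ T.Nonempty}
      {F | IsExposed ℝ (convexHull ℝ S) F ∧ F.Nonempty} := by
  refine InvOn.bijOn (f' := (S ∩ ·)) ⟨?_, ?_⟩ ?_ ?_
  · rintro T ⟨hT, hne⟩
    obtain ⟨l, rfl⟩ := hT hne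
    exact (congrArg _ (convexHull_toExposed l S)).trans (inter_toExposed_convexHull l S)
  · rintro F ⟨hF, -⟩
    exact convexHull_inter_eq_of_isExtreme hF.isExtreme (hF.convex (convex_convexHull ℝ S))
  · rintro T ⟨hT, hne⟩
    exact ⟨isExposed_convexHull_convexHull hT, convexHull_nonempty_iff.2 hne⟩
  · rintro F ⟨hF, hne⟩
    have hhull := convexHull_inter_eq_of_isExtreme hF.isExtreme (hF.convex (convex_convexHull ℝ S))
    refine ⟨?_, convexHull_nonempty_iff.1 (hhull ▸ hne)⟩
    obtain ⟨l, rfl⟩ := hF hne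
    exact fun _ ↦ ⟨l, inter_toExposed_convexHull l S⟩

lemma convexIndependent_of_isExposed_singleton (hS : ∀ x ∈ S, IsExposed ℝ S {x}) :
    ConvexIndependent ℝ ((↑) : S → E) := by
  refine ConvexIndependent.mono (convex_convexHull ℝ S).convexIndependent_extremePoints fun x hx ↦
    exposedPoints_subset_extremePoints (mem_exposedPoints_iff_exposed_singleton.2 ?_)
  simpa only [convexHull_singleton] using isExposed_convexHull_convexHull (hS x hx)

lemma mem_of_isExposed_of_add_eq_add (hT : IsExposed ℝ S T) {x y x' y' : E} (hx : x ∈ T)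
    (hy : y ∈ T) (hx' : x' ∈ S) (hy' : y' ∈ S) (h : x + y = x' + y') : x' ∈ T := by
  obtain ⟨l, rfl⟩ := hT ⟨x, hx⟩
  refine ⟨hx', fun z hz ↦ ?_⟩
  have hsum : l x + l y = l x' + l y' := by simpa only [map_add] using congrArg l h
  linarith [hx.2 z hz, hy.2 y' hy']

end Exposed

section FaceCount

variable {n : ℕ} {S T : Set (Fin n → ℝ)}

lemma polyDim_convexHull (S : Set (Fin n → ℝ)) : polyDim (convexHull ℝ S) = polyDim S := by
  rw [polyDim, polyDim, ← direction_affineSpan, affineSpan_convexHull, direction_affineSpan]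

lemma polyDim_eq_zero_iff : polyDim S = 0 ↔ S.Subsingleton := by
  rw [polyDim, Submodule.finrank_eq_zero, vectorSpan_eq_bot_iff_subsingleton]

lemma polyDim_eq_one_iff (hS : ConvexIndependent ℝ ((↑) : S → Fin n → ℝ)) :
    polyDim S = 1 ↔ S.ncard = 2 := by
  constructor
  · intro hdim
    obtain ⟨x, hx, y, hy, hxy⟩ : S.Nontrivial := by
      rw [← not_subsingleton_iff, ← polyDim_eq_zero_iff, hdim]
      exact one_ne_zero
    have hcol : Collinear ℝ S := collinear_iff_finrank_le_one.2 hdim.le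
    rw [eq_pair_of_collinear_of_convexIndependent hS hcol hx hy hxy, ncard_pair hxy]
  · intro hcard
    obtain ⟨x, y, hxy, rfl⟩ := ncard_eq_two.1 hcard
    rw [polyDim, vectorSpan_pair]
    exact finrank_span_singleton (sub_ne_zero.2 hxy)

lemma faceCount_convexHull (S : Set (Fin n → ℝ)) (k : ℕ) :
    faceCount (convexHull ℝ S) k =
      {T | IsExposed ℝ S T ∧ T.Nonempty ∧ polyDim T = k}.ncard := by
  have hbij := (bijOn_convexHull_isExposed S).inter_mapsTo (s₂ := {T | polyDim T = k})
    (t₂ := {F | polyDim F = k}) (fun T hT ↦ (polyDim_convexHull T).trans hT)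
    (fun T hT ↦ (polyDim_convexHull T).symm.trans hT.2)
  simpa only [faceCount, inter_def, mem_ofPred_eq, and_assoc] using hbij.ncard_eq.symm

lemma faceCount_zero_convexHull (hS : ∀ x ∈ S, IsExposed ℝ S {x}) :
    faceCount (convexHull ℝ S) 0 = S.ncard := by
  rw [faceCount_convexHull, ← ncard_image_of_injective S singleton_injective]
  congr 1
  ext T
  constructor
  · rintro ⟨hT, hne, hdim⟩
    obtain ⟨x, rfl⟩ := exists_eq_singleton_iff_nonempty_subsingleton.2
      ⟨hne, polyDim_eq_zero_iff.1 hdim⟩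
    exact ⟨x, hT.subset rfl, rfl⟩
  · rintro ⟨x, hx, rfl⟩
    exact ⟨hS x hx, singleton_nonempty x, polyDim_eq_zero_iff.2 subsingleton_singleton⟩

lemma faceCount_one_convexHull (hS : ∀ x ∈ S, IsExposed ℝ S {x}) :
    faceCount (convexHull ℝ S) 1 = {T | IsExposed ℝ S T ∧ T.ncard = 2}.ncard := by
  rw [faceCount_convexHull]
  congr 1
  ext T
  refine and_congr_right fun hT ↦ ?_
  rw [polyDim_eq_one_iff ((convexIndependent_of_isExposed_singleton hS).mono hT.subset)]
  exact and_iff_right_of_imp fun hcard ↦ nonempty_of_ncard_ne_zero (by simp [hcard])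

end FaceCount

section LabelledCopies

variable {V V' W : Type*} {F : SimpleGraph V} {F' : SimpleGraph V'} {G : SimpleGraph W}

/-- The labelled copies of `F` in `G`: the injective maps of vertices carrying edges of `F` to edges
of `G`. Unlike `SimpleGraph.Copy F G`, they form a subset of a type not depending on `F` or `G`, so
that unions and intersections over several graphs `F` make sense. -/
def labelledCopies (F : SimpleGraph V) (G : SimpleGraph W) : Set (V ↪ W) :=
  {f | F ≤ G.comap f}

lemma labelledCopies_sup (F₁ F₂ : SimpleGraph V) (G : SimpleGraph W) :
    labelledCopies (F₁ ⊔ F₂) G = labelledCopies F₁ G ∩ labelledCopies F₂ G :=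
  Set.ext fun f ↦ (sup_le_iff : F₁ ⊔ F₂ ≤ G.comap f ↔ _)

lemma trans_mem_labelledCopies (φ : F ≃g F') {f : V' ↪ W} (hf : f ∈ labelledCopies F' G) :
    φ.toEquiv.toEmbedding.trans f ∈ labelledCopies F G :=
  fun _ _ hvw ↦ hf (φ.map_adj_iff.2 hvw)

lemma ncard_labelledCopies_congr (φ : F ≃g F') (G : SimpleGraph W) :
    (labelledCopies F G).ncard = (labelledCopies F' G).ncard := by
  refine ncard_congr (fun f _ ↦ φ.symm.toEquiv.toEmbedding.trans f)
    (fun f hf ↦ trans_mem_labelledCopies φ.symm hf) ?_ ?_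
  · intro f g _ _ hfg
    ext v
    simpa using DFunLike.congr_fun hfg (φ v)
  · intro f hf
    refine ⟨_, trans_mem_labelledCopies φ hf, ?_⟩
    ext v
    simp

lemma map_trans_iso (φ : F ≃g F) (f : V ↪ W) :
    F.map (φ.toEquiv.toEmbedding.trans f) = F.map f := by
  have hφ : F.map φ = F := by
    ext v w
    obtain ⟨v, rfl⟩ := φ.surjective v
    obtain ⟨w, rfl⟩ := φ.surjective w
    rw [φ.map_adj_iff]
    exact SimpleGraph.map_adj_apply (f := φ.toEquiv.toEmbedding)
  conv_rhs => rw [← hφ, SimpleGraph.map_map]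
  rfl

lemma map_eq_map_iff (hF : F.support = univ) {f g : V ↪ W} :
    F.map g = F.map f ↔ ∃ φ : F ≃g F, g = φ.toEquiv.toEmbedding.trans f := by
  refine ⟨fun hmap ↦ ?_, ?_⟩
  · have hrange : range g = range f := by
      simpa only [SimpleGraph.support_map, hF, image_univ] using
        congrArg SimpleGraph.support hmap
    let σ : V ≃ V := (Equiv.ofInjective g g.injective).trans
      ((Equiv.setCongr hrange).trans (Equiv.ofInjective f f.injective).symm)
    have hσ : g = σ.toEmbedding.trans f := by
      ext v
      exact (Equiv.apply_ofInjective_symm f.injective (Equiv.setCongr hrange ⟨g v, _⟩)).symm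
    have hFσ : F.map σ = F := by
      refine SimpleGraph.map_injective f ?_
      rw [SimpleGraph.map_map, ← hmap, hσ]
      rfl
    refine ⟨⟨σ, fun {v w} ↦ ?_⟩, hσ⟩
    conv_lhs => rw [← hFσ]
    exact SimpleGraph.map_adj_apply (f := σ.toEmbedding)
  · rintro ⟨φ, rfl⟩
    exact map_trans_iso φ f

lemma ncard_eq_card_iso_mul_ncard_image_map (hF : F.support = univ) {A : Set (V ↪ W)}
    (hA : ∀ f ∈ A, ∀ φ : F ≃g F, φ.toEquiv.toEmbedding.trans f ∈ A) :
    A.ncard = Nat.card (F ≃g F) * ((fun f : V ↪ W ↦ F.map f) '' A).ncard := by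
  choose r hrA hr using fun H : (fun f : V ↪ W ↦ F.map f) '' A ↦ H.2
  let Φ : (F ≃g F) × ((fun f : V ↪ W ↦ F.map f) '' A) → A :=
    fun p ↦ ⟨p.1.toEquiv.toEmbedding.trans (r p.2), hA _ (hrA p.2) p.1⟩
  have hmap (p) : F.map (Φ p).1 = p.2.1 := (map_trans_iso p.1 _).trans (hr p.2)
  have hΦ : Function.Bijective Φ := by
    constructor
    · rintro ⟨φ, H⟩ ⟨ψ, K⟩ h
      obtain rfl : H = K := by
        ext1
        rw [← hmap ⟨φ, H⟩, h, hmap]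
      refine Prod.ext (RelIso.ext fun v ↦ (r H).injective ?_) rfl
      exact DFunLike.congr_fun (congrArg Subtype.val h) v
    · rintro ⟨f, hf⟩
      obtain ⟨φ, hφ⟩ := (map_eq_map_iff hF).1 (hr ⟨_, mem_image_of_mem _ hf⟩).symm
      exact ⟨⟨φ, _⟩, Subtype.ext hφ.symm⟩
  rw [← Nat.card_coe_set_eq, ← Nat.card_congr (Equiv.ofBijective Φ hΦ), Nat.card_prod,
    Nat.card_coe_set_eq]

lemma spanningCoe_toSubgraph (c : F.Copy G) : c.toSubgraph.spanningCoe = F.map c := by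
  ext x y
  exact ⟨fun h ↦ ⟨h.ne, h⟩, fun h ↦ h.2⟩

lemma verts_toSubgraph_eq_support (hF : F.support = univ) (c : F.Copy G) :
    c.toSubgraph.verts = c.toSubgraph.spanningCoe.support := by
  rw [spanningCoe_toSubgraph]
  exact (congrArg (c '' ·) hF).symm.trans (SimpleGraph.support_map c.toEmbedding F).symm

lemma image_spanningCoe_setOf_iso (F : SimpleGraph V) (G : SimpleGraph W) :
    SimpleGraph.Subgraph.spanningCoe '' {H : G.Subgraph | Nonempty (F ≃g H.coe)} =
      (fun f : V ↪ W ↦ F.map f) '' labelledCopies F G := by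
  rw [← SimpleGraph.Copy.range_toSubgraph, ← range_comp]
  ext H
  constructor
  · rintro ⟨c, rfl⟩
    exact ⟨c.toEmbedding, fun _ _ h ↦ c.toHom.map_adj h, (spanningCoe_toSubgraph c).symm⟩
  · rintro ⟨f, hf, rfl⟩
    exact ⟨⟨⟨f, fun h ↦ hf h⟩, f.injective⟩, spanningCoe_toSubgraph _⟩

lemma injOn_spanningCoe_setOf_iso (hF : F.support = univ) :
    InjOn SimpleGraph.Subgraph.spanningCoe {H : G.Subgraph | Nonempty (F ≃g H.coe)} := by
  rw [← SimpleGraph.Copy.range_toSubgraph]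
  rintro _ ⟨c, rfl⟩ _ ⟨d, rfl⟩ h
  refine SimpleGraph.Subgraph.verts_spanningCoe_injective (Prod.ext ?_ h)
  exact (verts_toSubgraph_eq_support hF c).trans <|
    (congrArg _ h).trans (verts_toSubgraph_eq_support hF d).symm

lemma ncard_labelledCopies_eq_copyCount_mul {m n : ℕ} {F : SimpleGraph (Fin m)}
    (hF : F.support = univ) (G : SimpleGraph (Fin n)) :
    (labelledCopies F G).ncard = copyCount G F * Nat.card (F ≃g F) := by
  have hcount : copyCount G F = {H : G.Subgraph | Nonempty (F ≃g H.coe)}.ncard := by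
    rw [copyCount, ← Nat.card_coe_set_eq]
    exact Nat.card_congr (.subtypeEquivRight fun H ↦ ⟨.map .symm, .map .symm⟩)
  rw [hcount, ← (injOn_spanningCoe_setOf_iso hF).ncard_image, image_spanningCoe_setOf_iso,
    mul_comm]
  exact ncard_eq_card_iso_mul_ncard_image_map hF fun f hf φ ↦ trans_mem_labelledCopies φ hf

lemma card_iso_self_eq_card_perm [Fintype V] [DecidableEq V] (F : SimpleGraph V)
    [DecidableRel F.Adj] :
    Nat.card (F ≃g F) =
      Fintype.card {σ : Equiv.Perm V // ∀ v w, F.Adj (σ v) (σ w) ↔ F.Adj v w} := by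
  rw [← Nat.card_eq_fintype_card]
  exact Nat.card_congr ⟨fun φ ↦ ⟨φ.toEquiv, fun _ _ ↦ φ.map_adj_iff⟩,
    fun σ ↦ ⟨σ.1, fun {v w} ↦ σ.2 v w⟩, fun _ ↦ rfl, fun _ ↦ rfl⟩

end LabelledCopies

section OppositePairs

open SimpleGraph (cycleGraph fromEdgeSet)

variable {W : Type*} {G : SimpleGraph W} {f : Fin 4 ↪ W}

/-- The perfect matching `01 | 23` of `Fin 4`, the pattern of a pair of disjoint edges. It lies in
exactly two 4-cycles, `cycleGraph 4` and `crossedCycle`. -/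
abbrev perfectMatching : SimpleGraph (Fin 4) := fromEdgeSet {s(0, 1), s(2, 3)}

/-- The 4-cycle `0132`, which contains `perfectMatching` and together with `cycleGraph 4` covers
the complete graph. -/
abbrev crossedCycle : SimpleGraph (Fin 4) := (cycleGraph 4).comap (Equiv.swap 2 3)

/-- The labelled copies of `perfectMatching` which form a pair of opposite edges of some 4-cycle of
`G`. -/
def labelledOppositePairs (G : SimpleGraph W) : Set (Fin 4 ↪ W) :=
  labelledCopies (cycleGraph 4) G ∪ labelledCopies crossedCycle G

/-- The two-element edge sets consisting of opposite edges of some 4-cycle of `G`. -/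
def oppositePairs (G : SimpleGraph W) : Set (Set (Sym2 W)) :=
  (fun f : Fin 4 ↪ W ↦ {s(f 0, f 1), s(f 2, f 3)}) '' labelledOppositePairs G

lemma support_perfectMatching : perfectMatching.support = univ :=
  eq_univ_of_forall (by decide : ∀ v, ∃ w, perfectMatching.Adj v w)

lemma support_cycleGraph_four : (cycleGraph 4).support = univ :=
  eq_univ_of_forall (by decide : ∀ v, ∃ w, (cycleGraph 4).Adj v w)

lemma card_iso_self_perfectMatching : Nat.card (perfectMatching ≃g perfectMatching) = 8 := by
  rw [card_iso_self_eq_card_perm]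
  decide +kernel

lemma card_iso_self_cycleGraph_four : Nat.card (cycleGraph 4 ≃g cycleGraph 4) = 8 := by
  rw [card_iso_self_eq_card_perm]
  decide +kernel

lemma card_iso_self_top_fin_four :
    Nat.card ((⊤ : SimpleGraph (Fin 4)) ≃g (⊤ : SimpleGraph (Fin 4))) = 24 := by
  rw [card_iso_self_eq_card_perm]
  decide +kernel

lemma cycleGraph_four_sup_crossedCycle : cycleGraph 4 ⊔ crossedCycle = ⊤ := by
  ext v w
  revert v w
  decide

lemma comap_iso_perfectMatching {F : SimpleGraph (Fin 4)} (φ : perfectMatching ≃g perfectMatching)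
    (hF : F = cycleGraph 4 ∨ F = crossedCycle) :
    F.comap φ = cycleGraph 4 ∨ F.comap φ = crossedCycle := by
  have hdecide : ∀ σ : Equiv.Perm (Fin 4),
      (∀ v w, perfectMatching.Adj (σ v) (σ w) ↔ perfectMatching.Adj v w) →
      ((∀ v w, (cycleGraph 4).Adj (σ v) (σ w) ↔ (cycleGraph 4).Adj v w) ∨
        ∀ v w, (cycleGraph 4).Adj (σ v) (σ w) ↔ crossedCycle.Adj v w) ∧
      ((∀ v w, crossedCycle.Adj (σ v) (σ w) ↔ (cycleGraph 4).Adj v w) ∨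
        ∀ v w, crossedCycle.Adj (σ v) (σ w) ↔ crossedCycle.Adj v w) := by
    decide +kernel
  have hφ := hdecide φ.toEquiv fun _ _ ↦ φ.map_adj_iff
  simp only [SimpleGraph.ext_iff, funext_iff, eq_iff_iff]
  rcases hF with rfl | rfl
  exacts [hφ.1, hφ.2]

lemma trans_mem_labelledOppositePairs (hf : f ∈ labelledOppositePairs G)
    (φ : perfectMatching ≃g perfectMatching) :
    φ.toEquiv.toEmbedding.trans f ∈ labelledOppositePairs G := by
  obtain ⟨F, hF, hfF⟩ : ∃ F, (F = cycleGraph 4 ∨ F = crossedCycle) ∧ f ∈ labelledCopies F G :=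
    hf.elim (fun h ↦ ⟨_, .inl rfl, h⟩) fun h ↦ ⟨_, .inr rfl, h⟩
  have hmem : φ.toEquiv.toEmbedding.trans f ∈ labelledCopies (F.comap φ) G :=
    fun _ _ hvw ↦ hfF hvw
  rcases comap_iso_perfectMatching φ hF with h | h
  exacts [.inl (h ▸ hmem), .inr (h ▸ hmem)]

lemma edgeSet_map_perfectMatching (f : Fin 4 ↪ W) :
    (perfectMatching.map f).edgeSet = {s(f 0, f 1), s(f 2, f 3)} := by
  have hedges : perfectMatching.edgeSet = {s(0, 1), s(2, 3)} := by
    ext e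
    revert e
    decide
  rw [SimpleGraph.edgeSet_map, hedges, image_pair]
  rfl

lemma ncard_labelledOppositePairs (G : SimpleGraph W) :
    (labelledOppositePairs G).ncard = 8 * (oppositePairs G).ncard := by
  have himage : oppositePairs G = SimpleGraph.edgeSet ''
      ((fun f : Fin 4 ↪ W ↦ perfectMatching.map f) '' labelledOppositePairs G) := by
    simp only [oppositePairs, image_image, edgeSet_map_perfectMatching]
  rw [himage, ncard_image_of_injective _ SimpleGraph.edgeSet_injective,
    ← card_iso_self_perfectMatching]
  exact ncard_eq_card_iso_mul_ncard_image_map support_perfectMatching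
    fun _ hf φ ↦ trans_mem_labelledOppositePairs hf φ

lemma ncard_oppositePairs_add {n : ℕ} (G : SimpleGraph (Fin n)) :
    (oppositePairs G).ncard + 3 * copyCount G (⊤ : SimpleGraph (Fin 4)) =
      2 * copyCount G (cycleGraph 4) := by
  have hpairs := ncard_labelledOppositePairs G
  have hinclExcl := ncard_union_add_ncard_inter (labelledCopies (cycleGraph 4) G)
    (labelledCopies crossedCycle G)
  have hcrossed := ncard_labelledCopies_congr (SimpleGraph.Iso.comap (Equiv.swap 2 3)
    (cycleGraph 4)) G
  have hcycle := ncard_labelledCopies_eq_copyCount_mul support_cycleGraph_four G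
  have htop := ncard_labelledCopies_eq_copyCount_mul
    (SimpleGraph.support_top_of_nontrivial (V := Fin 4)) G
  rw [card_iso_self_cycleGraph_four] at hcycle
  rw [card_iso_self_top_fin_four] at htop
  rw [← labelledCopies_sup, cycleGraph_four_sup_crossedCycle, ← labelledOppositePairs] at hinclExcl
  lia

lemma mem_labelledCopies_cycleGraph_four : f ∈ labelledCopies (cycleGraph 4) G ↔
    G.Adj (f 0) (f 1) ∧ G.Adj (f 1) (f 2) ∧ G.Adj (f 2) (f 3) ∧ G.Adj (f 3) (f 0) := by
  refine ⟨fun h ↦ ⟨h (by decide), h (by decide), h (by decide), h (by decide)⟩, ?_⟩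
  rintro ⟨h01, h12, h23, h30⟩ v w hvw
  fin_cases v <;> fin_cases w <;>
    first | assumption | exact SimpleGraph.Adj.symm ‹_› | exact absurd hvw (by decide)

lemma mem_labelledCopies_crossedCycle : f ∈ labelledCopies crossedCycle G ↔
    G.Adj (f 0) (f 1) ∧ G.Adj (f 1) (f 3) ∧ G.Adj (f 3) (f 2) ∧ G.Adj (f 2) (f 0) := by
  refine ⟨fun h ↦ ⟨h (by decide), h (by decide), h (by decide), h (by decide)⟩, ?_⟩
  rintro ⟨h01, h13, h32, h20⟩ v w hvw
  fin_cases v <;> fin_cases w <;>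
    first | assumption | exact SimpleGraph.Adj.symm ‹_› | exact absurd hvw (by decide)

lemma mem_labelledOppositePairs : f ∈ labelledOppositePairs G ↔
    G.Adj (f 0) (f 1) ∧ G.Adj (f 2) (f 3) ∧
      (G.Adj (f 1) (f 2) ∧ G.Adj (f 3) (f 0) ∨ G.Adj (f 1) (f 3) ∧ G.Adj (f 2) (f 0)) := by
  rw [labelledOppositePairs, mem_union, mem_labelledCopies_cycleGraph_four,
    mem_labelledCopies_crossedCycle, G.adj_comm (f 3) (f 2)]
  tauto

lemma subset_edgeSet_of_mem_oppositePairs {U : Set (Sym2 W)} (hU : U ∈ oppositePairs G) :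
    U ⊆ G.edgeSet := by
  obtain ⟨f, hf, rfl⟩ := hU
  obtain ⟨h01, h23, -⟩ := mem_labelledOppositePairs.1 hf
  exact pair_subset h01 h23

lemma ncard_eq_two_of_mem_oppositePairs {U : Set (Sym2 W)} (hU : U ∈ oppositePairs G) :
    U.ncard = 2 := by
  obtain ⟨f, -, rfl⟩ := hU
  exact ncard_pair (by simp [f.injective.eq_iff])

end OppositePairs

section FaceSets

variable {V : Type*} [DecidableEq V] {G : SimpleGraph V} {U : Set (Sym2 V)} {e f : Sym2 V}
  {a b c d : V}

/-- The vector `e_i + e_j` attached to the unordered pair `{i, j}`; the vectors of the edges of a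
graph generate its edge polytope. -/
def edgeVector : Sym2 V → V → ℝ :=
  Sym2.lift ⟨fun i j ↦ Pi.single i 1 + Pi.single j 1, fun _ _ ↦ add_comm _ _⟩

/-- A set of edges of `G` is a face set if the corresponding edge vectors are those lying on a face
of the edge polytope of `G`. -/
def IsFaceSet (G : SimpleGraph V) (U : Set (Sym2 V)) : Prop :=
  IsExposed ℝ (edgeVector '' G.edgeSet) (edgeVector '' U)

lemma edgeVector_mk (i j : V) :
    edgeVector s(i, j) = Pi.single i (1 : ℝ) + Pi.single j (1 : ℝ) :=
  rfl

lemma edgeVector_apply_ne_zero_iff (e : Sym2 V) (v : V) : edgeVector e v ≠ 0 ↔ v ∈ e := by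
  induction e with | h i j
  rw [edgeVector_mk, Pi.add_apply, Pi.single_apply, Pi.single_apply, Sym2.mem_iff]
  split_ifs with hi hj hj <;> simp [hi, hj]

lemma edgeVector_injective : Function.Injective (edgeVector : Sym2 V → V → ℝ) := by
  intro e f hef
  ext v
  rw [← edgeVector_apply_ne_zero_iff, ← edgeVector_apply_ne_zero_iff, hef]

lemma IsFaceSet.subset (hU : IsFaceSet G U) : U ⊆ G.edgeSet :=
  (image_subset_image_iff edgeVector_injective).1 (IsExposed.subset hU)

lemma exists_strongDual_edgeVector [Finite V] (w : V → ℝ) :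
    ∃ l : StrongDual ℝ (V → ℝ), ∀ i j, l (edgeVector s(i, j)) = w i + w j := by
  cases nonempty_fintype V
  refine ⟨∑ i, w i • ContinuousLinearMap.proj i, fun i j ↦ ?_⟩
  simp [edgeVector_mk, mul_add, Finset.sum_add_distrib, Pi.single_apply]

lemma isFaceSet_of_weight [Finite V] (w : V → ℝ) (M : ℝ) (hU : U ⊆ G.edgeSet)
    (hw : ∀ i j, G.Adj i j → w i + w j ≤ M ∧ (w i + w j = M ↔ s(i, j) ∈ U)) :
    IsFaceSet G U := by
  obtain ⟨l, hl⟩ := exists_strongDual_edgeVector w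
  have hmax (e) (he : e ∈ G.edgeSet) :
      l (edgeVector e) ≤ M ∧ (l (edgeVector e) = M ↔ e ∈ U) := by
    induction e with | h i j
    simpa only [hl] using hw i j he
  intro hne
  obtain ⟨e₀, he₀⟩ := image_nonempty.1 hne
  refine ⟨l, Subset.antisymm ?_ ?_⟩
  · rintro _ ⟨e, he, rfl⟩
    refine ⟨mem_image_of_mem _ (hU he), ?_⟩
    rintro _ ⟨f, hf, rfl⟩
    exact (hmax f hf).1.trans_eq ((hmax e (hU he)).2.2 he).symm
  · rintro _ ⟨⟨e, he, rfl⟩, hle⟩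
    refine mem_image_of_mem _ ((hmax e he).2.1 ((hmax e he).1.antisymm ?_))
    rw [← (hmax e₀ (hU he₀)).2.2 he₀]
    exact hle _ (mem_image_of_mem _ (hU he₀))

lemma isFaceSet_singleton [Finite V] (he : e ∈ G.edgeSet) : IsFaceSet G {e} := by
  induction e with | h a b
  refine isFaceSet_of_weight (fun i ↦ if i = a ∨ i = b then 1 else 0) 2
    (singleton_subset_iff.2 he) fun i j hij ↦ ?_
  have hne : i ≠ j := hij.ne
  rw [mem_singleton_iff, Sym2.eq_iff]
  grind [G.ne_of_adj he]

lemma isFaceSet_pair_of_common_vertex [Finite V] (hab : G.Adj a b) (hac : G.Adj a c)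
    (hbc : b ≠ c) : IsFaceSet G {s(a, b), s(a, c)} := by
  refine isFaceSet_of_weight (fun i ↦ if i = a then 2 else if i = b ∨ i = c then 1 else 0) 3
    (pair_subset hab hac) fun i j hij ↦ ?_
  have hne : i ≠ j := hij.ne
  rw [mem_insert_iff, mem_singleton_iff, Sym2.eq_iff, Sym2.eq_iff]
  grind [hab.ne, hac.ne]

lemma isFaceSet_pair_of_not_adj [Finite V] (he : e ∈ G.edgeSet) (hf : f ∈ G.edgeSet)
    (hdisj : ∀ v ∈ e, v ∉ f) (ha : a ∈ e) (hadj : ∀ v ∈ f, ¬ G.Adj a v) :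
    IsFaceSet G {e, f} := by
  obtain ⟨b, rfl⟩ := ha
  induction f with | h c d
  simp only [Sym2.mem_iff, forall_eq_or_imp, forall_eq, not_or] at hdisj hadj
  -- Only edges from `a` to `c` or `d` would have a weight exceeding 4, and there are none.
  refine isFaceSet_of_weight
    (fun i ↦ if i = a then 3 else if i = b then 1 else if i = c ∨ i = d then 2 else 0) 4
    (pair_subset he hf) fun i j hij ↦ ?_
  have hne : i ≠ j := hij.ne
  have hcomm : G.Adj i j ↔ G.Adj j i := G.adj_comm i j
  rw [mem_insert_iff, mem_singleton_iff, Sym2.eq_iff, Sym2.eq_iff]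
  grind [G.ne_of_adj he, G.ne_of_adj hf]

lemma IsFaceSet.mem_of_adj (hU : IsFaceSet G U) (hab : s(a, b) ∈ U) (hcd : s(c, d) ∈ U)
    (hbc : G.Adj b c) (hda : G.Adj d a) : s(b, c) ∈ U := by
  have hsum : edgeVector s(a, b) + edgeVector s(c, d) =
      edgeVector s(b, c) + edgeVector s(d, a) := by
    simp only [edgeVector_mk]
    abel
  exact edgeVector_injective.mem_set_image.1 <|
    mem_of_isExposed_of_add_eq_add hU (mem_image_of_mem _ hab) (mem_image_of_mem _ hcd)
      (mem_image_of_mem _ hbc) (mem_image_of_mem _ hda) hsum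

lemma not_isFaceSet_of_mem_oppositePairs (hU : U ∈ oppositePairs G) :
    ¬ IsFaceSet G U := by
  obtain ⟨g, hg, rfl⟩ := hU
  intro hface
  obtain ⟨-, -, ⟨h12, h30⟩ | ⟨h13, h20⟩⟩ := mem_labelledOppositePairs.1 hg
  · have hmem := hface.mem_of_adj (.inl rfl) (.inr rfl) h12 h30
    simp [g.injective.eq_iff] at hmem
  · have hmem := hface.mem_of_adj (.inl rfl) (.inr Sym2.eq_swap) h13 h20
    simp [g.injective.eq_iff] at hmem

lemma isFaceSet_pair_or_exists_adj [Finite V] (he : e ∈ G.edgeSet) (hf : f ∈ G.edgeSet)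
    (hdisj : ∀ v ∈ e, v ∉ f) :
    IsFaceSet G {e, f} ∨ (∀ a ∈ e, ∃ v ∈ f, G.Adj a v) ∧ ∀ c ∈ f, ∃ v ∈ e, G.Adj c v := by
  by_contra! h
  obtain ⟨hface, hnadj⟩ := h
  by_cases! he' : ∃ a ∈ e, ∀ v ∈ f, ¬ G.Adj a v
  · obtain ⟨a, ha, hadj⟩ := he'
    exact hface (isFaceSet_pair_of_not_adj he hf hdisj ha hadj)
  · obtain ⟨c, hc, hadj⟩ := hnadj he'
    rw [pair_comm] at hface
    exact hface (isFaceSet_pair_of_not_adj hf he (fun v hvf hve ↦ hdisj v hve hvf) hc hadj)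

lemma isFaceSet_pair_or_mem_oppositePairs [Finite V] (he : e ∈ G.edgeSet)
    (hf : f ∈ G.edgeSet) (hef : e ≠ f) :
    IsFaceSet G {e, f} ∨ {e, f} ∈ oppositePairs G := by
  by_cases! hdisj : ∃ v, v ∈ e ∧ v ∈ f
  · obtain ⟨a, ⟨b, rfl⟩, c, rfl⟩ := hdisj
    exact .inl (isFaceSet_pair_of_common_vertex he hf fun hbc ↦ hef (by rw [hbc]))
  refine (isFaceSet_pair_or_exists_adj he hf hdisj).imp_right fun ⟨hadj_e, hadj_f⟩ ↦ ?_
  induction e with | h a b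
  induction f with | h c d
  have hab : a ≠ b := G.ne_of_adj he
  have hcd : c ≠ d := G.ne_of_adj hf
  simp only [Sym2.mem_iff, forall_eq_or_imp, forall_eq, not_or, exists_eq_or_imp,
    exists_eq_left] at hdisj hadj_e hadj_f
  have hinj : Function.Injective ![a, b, c, d] := by
    simpa [← List.nodup_ofFn] using ⟨⟨hab, hdisj.1⟩, hdisj.2, hcd⟩
  refine ⟨⟨_, hinj⟩, mem_labelledOppositePairs.2 ⟨he, hf, ?_⟩, rfl⟩
  change G.Adj b c ∧ G.Adj d a ∨ G.Adj b d ∧ G.Adj c a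
  simp only [G.adj_comm c, G.adj_comm d] at hadj_f ⊢
  tauto

lemma ncard_isFaceSet_add_ncard_oppositePairs [Finite V] (G : SimpleGraph V) :
    {U | IsFaceSet G U ∧ U.ncard = 2}.ncard + (oppositePairs G).ncard =
      G.edgeSet.ncard.choose 2 := by
  have hpartition : {U | IsFaceSet G U ∧ U.ncard = 2} ∪ oppositePairs G =
      {U | U ⊆ G.edgeSet ∧ U.ncard = 2} := by
    refine Subset.antisymm (union_subset (fun U hU ↦ ⟨hU.1.subset, hU.2⟩) fun U hU ↦
      ⟨subset_edgeSet_of_mem_oppositePairs hU,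
        ncard_eq_two_of_mem_oppositePairs hU⟩) ?_
    rintro U ⟨hUG, hcard⟩
    obtain ⟨e, f, hef, rfl⟩ := ncard_eq_two.1 hcard
    exact (isFaceSet_pair_or_mem_oppositePairs (hUG (.inl rfl)) (hUG (.inr rfl)) hef).imp_left
      fun h ↦ ⟨h, hcard⟩
  have hdisj : Disjoint {U | IsFaceSet G U ∧ U.ncard = 2} (oppositePairs G) :=
    disjoint_left.2 fun U hU hU' ↦ not_isFaceSet_of_mem_oppositePairs hU' hU.1
  rw [← ncard_powerset_ncard (toFinite _), ← hpartition, ncard_union_eq hdisj]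

end FaceSets

section EdgePolytope

variable {n : ℕ}

lemma edgePolytope_eq_convexHull_image_edgeVector (G : SimpleGraph (Fin n)) :
    edgePolytope G = convexHull ℝ (edgeVector '' G.edgeSet) := by
  rw [edgePolytope]
  congr 1
  ext x
  constructor
  · rintro ⟨i, j, hij, rfl⟩
    exact ⟨s(i, j), hij, rfl⟩
  · rintro ⟨e, he, rfl⟩
    induction e with | h i j
    exact ⟨i, j, he, rfl⟩

lemma isExposed_singleton_of_mem_image_edgeVector {G : SimpleGraph (Fin n)} {x : Fin n → ℝ}
    (hx : x ∈ edgeVector '' G.edgeSet) : IsExposed ℝ (edgeVector '' G.edgeSet) {x} := by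
  obtain ⟨e, he, rfl⟩ := hx
  simpa only [IsFaceSet, image_singleton] using isFaceSet_singleton he

lemma faceCount_zero_edgePolytope (G : SimpleGraph (Fin n)) :
    faceCount (edgePolytope G) 0 = G.edgeSet.ncard := by
  rw [edgePolytope_eq_convexHull_image_edgeVector,
    faceCount_zero_convexHull fun _ ↦ isExposed_singleton_of_mem_image_edgeVector,
    ncard_image_of_injective _ edgeVector_injective]

lemma faceCount_one_edgePolytope (G : SimpleGraph (Fin n)) :
    faceCount (edgePolytope G) 1 = {U | IsFaceSet G U ∧ U.ncard = 2}.ncard := by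
  rw [edgePolytope_eq_convexHull_image_edgeVector,
    faceCount_one_convexHull fun _ ↦ isExposed_singleton_of_mem_image_edgeVector,
    ← ncard_image_of_injective _ (image_injective.2 edgeVector_injective)]
  congr 1
  ext T
  constructor
  · rintro ⟨hT, hcard⟩
    obtain ⟨U, -, rfl⟩ := subset_image_iff.1 hT.subset
    rw [ncard_image_of_injective _ edgeVector_injective] at hcard
    exact ⟨U, ⟨hT, hcard⟩, rfl⟩
  · rintro ⟨U, ⟨hU, hcard⟩, rfl⟩
    exact ⟨hU, (ncard_image_of_injective _ edgeVector_injective).trans hcard⟩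

end EdgePolytope

theorem f0_f1_edgePolytope_general {n : ℕ} (G : SimpleGraph (Fin n)) :
    faceCount (edgePolytope G) 0 = G.edgeSet.ncard ∧
      (faceCount (edgePolytope G) 1 : ℤ) =
        (G.edgeSet.ncard.choose 2 : ℤ)
          - 2 * copyCount G (SimpleGraph.cycleGraph 4)
          + 3 * copyCount G (⊤ : SimpleGraph (Fin 4)) := by
  refine ⟨faceCount_zero_edgePolytope G, ?_⟩
  have hedges := ncard_isFaceSet_add_ncard_oppositePairs G
  have hpairs := ncard_oppositePairs_add G
  rw [← faceCount_one_edgePolytope] at hedges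
  lia

/-- For a graph `G` with no isolated vertices, the edge polytope `P(G)` has exactly
`e(G)` vertices and `C(e(G), 2) - 2 c₄(G) + 3 k₄(G)` edges, where `c₄(G)` and `k₄(G)`
are the numbers of subgraphs of `G` isomorphic to `C₄` and to `K₄` respectively. -/
theorem f0_f1_edgePolytope {n : ℕ} (G : SimpleGraph (Fin n))
    (hiso : ∀ v : Fin n, ∃ w : Fin n, G.Adj v w) :
    faceCount (edgePolytope G) 0 = G.edgeSet.ncard ∧
      (faceCount (edgePolytope G) 1 : ℤ) =
        (G.edgeSet.ncard.choose 2 : ℤ)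
          - 2 * copyCount G (SimpleGraph.cycleGraph 4)
          + 3 * copyCount G (⊤ : SimpleGraph (Fin 4)) :=
  f0_f1_edgePolytope_general G
end

section
/- Let G be a finite simple graph with no isolated vertices, and let f₀ and f₁ denote the numbers of vertices and edges of the edge polytope P(G). Then f₀^{3/2} − f₀ ≤ f₁, and equality holds if and only if G is a complete bipartite graph K_{m,m} with two parts of equal size. -/
open Set

/-!
Nonempty faces of the edge polytope correspond to the sets of edges of `G` on which a vertex
weighting is maximal. So its vertices are the edges of `G`, and two of them span an edge of the
polytope unless they are opposite sides of a 4-cycle of `G`.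

Let `G` have `m` edges, and let `d` be the number of polytope edges at the vertex `ij`, where `i`
and `j` have degrees `a` and `b`. An edge opposite to `ij` avoids both `i` and `j`, which gives
`d + 2 ≥ a + b`; and it joins a neighbour of `i` to a neighbour of `j`, which gives
`d + 2 ≥ m - a * b + a + b`. Together they imply `(d + 2) ^ 2 ≥ 4 * m`, and summing
`d ≥ 2 * √m - 2` over all edges of `G` counts every polytope edge twice. Equality forces `a = b`
and `m = a * b`, and that the neighbourhoods of `i` and `j` are completely joined.
-/

namespace EdgePolytope

section ConvexHull

variable {E : Type*} [AddCommGroup E] [Module ℝ E]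

theorem mem_convexHull_inter_of_mem_convexHull {V : Set E} (l : E →ₗ[ℝ] ℝ) {M : ℝ}
    (hl : ∀ v ∈ V, l v ≤ M) {x : E} (hx : x ∈ convexHull ℝ V) (hxM : l x = M) :
    x ∈ convexHull ℝ (V ∩ {v | l v = M}) := by
  have hV : V = (V ∩ {v | l v = M}) ∪ (V ∩ {v | l v < M}) := by
    rw [← inter_union_distrib_left, left_eq_inter]
    exact fun v hv ↦ (hl v hv).eq_or_lt
  have hlt : convexHull ℝ (V ∩ {v | l v < M}) ⊆ {v | l v < M} :=
    convexHull_min inter_subset_right (convex_halfSpace_lt l.isLinear M)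
  have heq : convexHull ℝ (V ∩ {v | l v = M}) ⊆ {v | l v = M} :=
    convexHull_min inter_subset_right (convex_hyperplane l.isLinear M)
  rcases (V ∩ {v | l v = M}).eq_empty_or_nonempty with h₀ | h₀
  · rw [hV, h₀, empty_union] at hx
    exact absurd hxM (hlt hx).ne
  rcases (V ∩ {v | l v < M}).eq_empty_or_nonempty with h₁ | h₁
  · rwa [hV, h₁, union_empty] at hx
  rw [hV, convexHull_union h₀ h₁, mem_convexJoin] at hx
  obtain ⟨a, ha, b, hb, s, t, -, -, hst, rfl⟩ := hx
  have hab : s * M + t * l b = M := by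
    rwa [map_add, map_smul, map_smul, (heq ha : l a = M)] at hxM
  have ht0 : t = 0 := by
    have hmul : t * (M - l b) = 0 := by
      linear_combination M * hst - hab
    exact (mul_eq_zero.1 hmul).resolve_right (sub_pos.2 (hlt hb)).ne'
  have hs1 : s = 1 := by linarith
  simpa [ht0, hs1] using ha

variable [TopologicalSpace E]

theorem toExposed_convexHull (l : StrongDual ℝ E) (V : Set E) :
    l.toExposed (convexHull ℝ V) = convexHull ℝ (l.toExposed V) := by
  have hle {v : E} (hv : ∀ w ∈ V, l w ≤ l v) : ∀ w ∈ convexHull ℝ V, l w ≤ l v :=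
    convexHull_min hv (convex_halfSpace_le l.toLinearMap.isLinear (l v))
  apply Subset.antisymm
  · rintro x ⟨hx, hmax⟩
    have hV : ∀ v ∈ V, l v ≤ l x := fun v hv ↦ hmax v (subset_convexHull ℝ V hv)
    refine convexHull_mono ?_
      (mem_convexHull_inter_of_mem_convexHull (l : E →ₗ[ℝ] ℝ) hV hx rfl)
    exact fun v hv ↦ ⟨hv.1, fun w hw ↦ (hV w hw).trans_eq hv.2.symm⟩
  · exact convexHull_min (fun v hv ↦ ⟨subset_convexHull ℝ V hv.1, hle hv.2⟩)
      (ContinuousLinearMap.toExposed.isExposed.convex (convex_convexHull ℝ V))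

theorem isExposed_convexHull_and_nonempty_iff {V F : Set E} :
    IsExposed ℝ (convexHull ℝ V) F ∧ F.Nonempty ↔
      ∃ l : StrongDual ℝ E, (l.toExposed V).Nonempty ∧ convexHull ℝ (l.toExposed V) = F := by
  constructor
  · rintro ⟨hF, hne⟩
    obtain ⟨l, rfl⟩ := hF hne
    have hl : l.toExposed (convexHull ℝ V) = convexHull ℝ (l.toExposed V) :=
      toExposed_convexHull l V
    refine ⟨l, (convexHull_nonempty_iff (𝕜 := ℝ)).1 ?_, hl.symm⟩
    rwa [← hl]
  · rintro ⟨l, hne, rfl⟩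
    refine ⟨?_, hne.convexHull⟩
    rw [← toExposed_convexHull]
    exact ContinuousLinearMap.toExposed.isExposed

end ConvexHull

section EdgeVec

variable {V : Type*}

/-- The vector `e_i + e_j` attached to the edge `s(i, j)`, encoded as the indicator function of the
set `{i, j}`; on the diagonal `s(i, i)` it is therefore `e_i`. -/
noncomputable def edgeVec (e : Sym2 V) : V → ℝ := (e : Set V).indicator 1

theorem edgeVec_injective : Function.Injective (edgeVec (V := V)) :=
  fun _ _ h ↦ SetLike.coe_injective (indicator_one_inj ℝ h)

theorem edgeVec_mk [DecidableEq V] {i j : V} (h : i ≠ j) :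
    edgeVec s(i, j) = Pi.single i 1 + Pi.single j 1 := by
  classical
  ext k
  simp only [edgeVec, indicator_apply, SetLike.mem_coe, Sym2.mem_iff, Pi.add_apply,
    Pi.single_apply, Pi.one_apply]
  grind

theorem eq_or_eq_of_collinear_indicator {s t u : Set V}
    (h : Collinear ℝ {s.indicator 1, t.indicator 1, u.indicator (1 : V → ℝ)}) (hst : s ≠ t) :
    u = s ∨ u = t := by
  classical
  obtain ⟨d, hd⟩ := (collinear_iff_of_mem (mem_insert _ _)).1 h
  obtain ⟨a, ha⟩ := hd (t.indicator 1) (by simp)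
  obtain ⟨b, hb⟩ := hd (u.indicator 1) (by simp)
  obtain ⟨x, hx⟩ : ∃ x, ¬ (x ∈ s ↔ x ∈ t) := by
    by_contra! hx
    exact hst (Set.ext hx)
  have hab : b = 0 ∨ b = a := by
    have hax := congrFun ha x
    have hbx := congrFun hb x
    simp only [vadd_eq_add, Pi.add_apply, Pi.smul_apply, smul_eq_mul, indicator_apply,
      Pi.one_apply] at hax hbx
    grind
  rcases hab with rfl | rfl
  · exact Or.inl (indicator_one_inj ℝ (by simpa using hb))
  · exact Or.inr (indicator_one_inj ℝ (hb.trans ha.symm))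

theorem eq_or_eq_of_collinear_edgeVec {e f g : Sym2 V}
    (h : Collinear ℝ {edgeVec e, edgeVec f, edgeVec g}) (hef : e ≠ f) : g = e ∨ g = f := by
  simpa only [SetLike.coe_set_eq] using
    eq_or_eq_of_collinear_indicator h (SetLike.coe_injective.ne hef)

end EdgeVec

section Dimension

variable {n : ℕ}

theorem polyDim_convexHull (S : Set (Fin n → ℝ)) : polyDim (convexHull ℝ S) = polyDim S := by
  rw [polyDim, polyDim, ← direction_affineSpan, affineSpan_convexHull, direction_affineSpan]

theorem polyDim_eq_zero_iff {S : Set (Fin n → ℝ)} : polyDim S = 0 ↔ S.Subsingleton := by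
  rw [polyDim, Submodule.finrank_eq_zero, vectorSpan_eq_bot_iff_subsingleton]

theorem polyDim_image_edgeVec_eq_zero_iff {S : Set (Sym2 (Fin n))} :
    polyDim (edgeVec '' S) = 0 ↔ S.Subsingleton := by
  rw [polyDim_eq_zero_iff, edgeVec_injective.subsingleton_image_iff]

theorem polyDim_image_edgeVec_eq_one_iff {S : Set (Sym2 (Fin n))} :
    polyDim (edgeVec '' S) = 1 ↔ ∃ e f, e ≠ f ∧ S = {e, f} := by
  constructor
  · intro hS
    have hcol : Collinear ℝ (edgeVec '' S) := collinear_iff_finrank_le_one.2 hS.le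
    obtain ⟨e, he, f, hf, hef⟩ : S.Nontrivial := by
      rw [← not_subsingleton_iff, ← polyDim_image_edgeVec_eq_zero_iff, hS]
      exact one_ne_zero
    have hSef : S ⊆ {e, f} := fun g hg ↦
      eq_or_eq_of_collinear_edgeVec
        (hcol.subset (by simp only [insert_subset_iff, singleton_subset_iff, mem_image_of_mem, *,
          true_and])) hef
    exact ⟨e, f, hef, hSef.antisymm (pair_subset he hf)⟩
  · rintro ⟨e, f, hef, rfl⟩
    rw [image_pair, polyDim, vectorSpan_pair]
    exact finrank_span_singleton (sub_ne_zero.2 (edgeVec_injective.ne hef))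

end Dimension

section Faces

variable {V : Type*} {G : SimpleGraph V} {S : Set (Sym2 V)} {e f : Sym2 V} {i j k l : V}

/-- The edge sets of the nonempty faces of the edge polytope: a nonempty set is facial if it
consists of the edges of maximal weight for some `c : V → ℝ`, where `s(i, j)` has weight
`c i + c j`. -/
def IsFacial (G : SimpleGraph V) (S : Set (Sym2 V)) : Prop :=
  S.Nonempty ∧ ∃ c : V → ℝ,
    S = {e ∈ G.edgeSet | ∀ f ∈ G.edgeSet, (f.map c).add ≤ (e.map c).add}

theorem IsFacial.subset_edgeSet (h : IsFacial G S) : S ⊆ G.edgeSet := by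
  obtain ⟨-, c, rfl⟩ := h
  exact sep_subset _ _

theorem isFacial_of_forall_adj (hne : S.Nonempty) (hS : S ⊆ G.edgeSet) (c : V → ℝ) {M : ℝ}
    (hle : ∀ x y, G.Adj x y → c x + c y ≤ M)
    (heq : ∀ x y, G.Adj x y → (c x + c y = M ↔ s(x, y) ∈ S)) : IsFacial G S := by
  have hle' : ∀ g ∈ G.edgeSet, (g.map c).add ≤ M := Sym2.ind hle
  have heq' : ∀ g ∈ G.edgeSet, ((g.map c).add = M ↔ g ∈ S) := Sym2.ind heq
  refine ⟨hne, c, Subset.antisymm (fun g hg ↦ ⟨hS hg, fun g' hg' ↦ ?_⟩) fun g hg ↦ ?_⟩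
  · exact (hle' g' hg').trans_eq ((heq' g (hS hg)).2 hg).symm
  · obtain ⟨g₀, hg₀⟩ := hne
    have hmax : (g₀.map c).add ≤ (g.map c).add := hg.2 g₀ (hS hg₀)
    rw [(heq' g₀ (hS hg₀)).2 hg₀] at hmax
    exact (heq' g hg.1).1 ((hle' g hg.1).antisymm hmax)

/-- Both `s(i, j), s(k, l)` and `s(i, k), s(j, l)` have total weight `c i + c j + c k + c l`. -/
theorem IsFacial.mem_of_adj (h : IsFacial G S) (hij : s(i, j) ∈ S) (hkl : s(k, l) ∈ S)
    (hik : G.Adj i k) (hjl : G.Adj j l) : s(i, k) ∈ S := by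
  obtain ⟨-, c, rfl⟩ := h
  refine ⟨hik, fun g hg ↦ (hij.2 g hg).trans ?_⟩
  have hmax : c j + c l ≤ c k + c l := hkl.2 s(j, l) hjl
  change c i + c j ≤ c i + c k
  linarith

theorem map_edgeVec_eq_add [DecidableEq V] (φ : StrongDual ℝ (V → ℝ)) (he : e ∈ G.edgeSet) :
    φ (edgeVec e) = (e.map fun i ↦ φ (Pi.single i 1)).add := by
  induction e with | h i j =>
  rw [edgeVec_mk (G.ne_of_adj he), map_add, Sym2.map_mk, Sym2.add_mk]

theorem toExposed_image_edgeVec [DecidableEq V] (φ : StrongDual ℝ (V → ℝ)) :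
    φ.toExposed (edgeVec '' G.edgeSet) = edgeVec '' {e ∈ G.edgeSet | ∀ f ∈ G.edgeSet,
      (f.map fun i ↦ φ (Pi.single i 1)).add ≤ (e.map fun i ↦ φ (Pi.single i 1)).add} := by
  ext x
  constructor
  · rintro ⟨⟨e, he, rfl⟩, hmax⟩
    refine ⟨e, ⟨he, fun f hf ↦ ?_⟩, rfl⟩
    rw [← map_edgeVec_eq_add φ he, ← map_edgeVec_eq_add φ hf]
    exact hmax _ (mem_image_of_mem edgeVec hf)
  · rintro ⟨e, ⟨he, hmax⟩, rfl⟩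
    refine ⟨mem_image_of_mem edgeVec he, forall_mem_image.2 fun f hf ↦ ?_⟩
    rw [map_edgeVec_eq_add φ he, map_edgeVec_eq_add φ hf]
    exact hmax f hf

theorem isFacial_iff_exists_toExposed_eq [Finite V] : IsFacial G S ↔
    ∃ φ : StrongDual ℝ (V → ℝ), (φ.toExposed (edgeVec '' G.edgeSet)).Nonempty ∧
      φ.toExposed (edgeVec '' G.edgeSet) = edgeVec '' S := by
  classical
  have := Fintype.ofFinite V
  constructor
  · rintro ⟨hne, c, hS⟩
    have hc : (fun i ↦ LinearMap.toContinuousLinearMap (Fintype.linearCombination ℝ c)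
        (Pi.single i 1)) = c := by
      ext i
      rw [LinearMap.coe_toContinuousLinearMap', Fintype.linearCombination_apply_single, one_smul]
    have hφ := toExposed_image_edgeVec (G := G)
      (LinearMap.toContinuousLinearMap (Fintype.linearCombination ℝ c))
    rw [hc, ← hS] at hφ
    exact ⟨_, hφ ▸ hne.image edgeVec, hφ⟩
  · rintro ⟨φ, hne, hφ⟩
    rw [hφ, image_nonempty] at hne
    rw [toExposed_image_edgeVec] at hφ
    exact ⟨hne, _, edgeVec_injective.image_injective hφ.symm⟩

theorem IsFacial.mem_of_edgeVec_mem_convexHull [Finite V] (h : IsFacial G S) (he : e ∈ G.edgeSet)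
    (hmem : edgeVec e ∈ convexHull ℝ (edgeVec '' S)) : e ∈ S := by
  obtain ⟨φ, -, hφ⟩ := isFacial_iff_exists_toExposed_eq.1 h
  rw [← hφ, ← toExposed_convexHull] at hmem
  have hmem' : edgeVec e ∈ φ.toExposed (edgeVec '' G.edgeSet) :=
    ⟨mem_image_of_mem edgeVec he, fun x hx ↦ hmem.2 x (subset_convexHull ℝ _ hx)⟩
  rwa [hφ, edgeVec_injective.mem_set_image] at hmem'

theorem injOn_convexHull_image_edgeVec [Finite V] :
    InjOn (fun S ↦ convexHull ℝ (edgeVec '' S)) {S | IsFacial G S} := by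
  have hsub {S T : Set (Sym2 V)} (hS : IsFacial G S) (hT : IsFacial G T)
      (hST : convexHull ℝ (edgeVec '' S) = convexHull ℝ (edgeVec '' T)) : S ⊆ T := fun e he ↦
    hT.mem_of_edgeVec_mem_convexHull (hS.subset_edgeSet he)
      (hST ▸ subset_convexHull ℝ _ (mem_image_of_mem edgeVec he))
  exact fun S hS T hT hST ↦ (hsub hS hT hST).antisymm (hsub hT hS hST.symm)

theorem edgePolytope_eq_convexHull_image_edgeVec {n : ℕ} (G : SimpleGraph (Fin n)) :
    edgePolytope G = convexHull ℝ (edgeVec '' G.edgeSet) := by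
  rw [edgePolytope]
  congr 1
  ext x
  constructor
  · rintro ⟨i, j, hij, rfl⟩
    exact ⟨s(i, j), hij, edgeVec_mk hij.ne⟩
  · rintro ⟨⟨i, j⟩, hij, rfl⟩
    exact ⟨i, j, hij, edgeVec_mk (G.ne_of_adj hij)⟩

theorem faceCount_edgePolytope {n : ℕ} (G : SimpleGraph (Fin n)) (d : ℕ) :
    faceCount (edgePolytope G) d = {S | IsFacial G S ∧ polyDim (edgeVec '' S) = d}.ncard := by
  rw [faceCount, ← ((injOn_convexHull_image_edgeVec (G := G)).mono fun S hS ↦ hS.1).ncard_image]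
  congr 1
  ext F
  simp only [mem_ofPred_eq, mem_image, ← and_assoc, edgePolytope_eq_convexHull_image_edgeVec,
    isExposed_convexHull_and_nonempty_iff]
  constructor
  · rintro ⟨⟨φ, hne, rfl⟩, hd⟩
    obtain ⟨S, -, hS⟩ := subset_image_iff.1
      (fun _ hx ↦ hx.1 : φ.toExposed (edgeVec '' G.edgeSet) ⊆ edgeVec '' G.edgeSet)
    rw [polyDim_convexHull, ← hS] at hd
    exact ⟨S, ⟨isFacial_iff_exists_toExposed_eq.2 ⟨φ, hne, hS.symm⟩, hd⟩, by rw [hS]⟩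
  · rintro ⟨S, ⟨hS, hd⟩, rfl⟩
    obtain ⟨φ, hne, hφ⟩ := isFacial_iff_exists_toExposed_eq.1 hS
    exact ⟨⟨φ, hne, by rw [hφ]⟩, by rwa [polyDim_convexHull]⟩

end Faces

section Skeleton

variable {V : Type*} {G : SimpleGraph V} {e f : Sym2 V} {i j k l : V}

/-- Two edges are opposite if they are opposite sides of a 4-cycle of `G`; here `s(i, j)` and
`s(k, l)` are completed to a 4-cycle by `s(i, k)` and `s(j, l)`. -/
def IsOpposite (G : SimpleGraph V) (e f : Sym2 V) : Prop :=
  ∃ i j k l, e = s(i, j) ∧ f = s(k, l) ∧ G.Adj i k ∧ G.Adj j l ∧ i ≠ l ∧ j ≠ k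

instance [Fintype V] [DecidableEq V] [DecidableRel G.Adj] : DecidableRel (IsOpposite G) :=
  fun e f ↦ inferInstanceAs
    (Decidable (∃ i j k l, e = s(i, j) ∧ f = s(k, l) ∧ G.Adj i k ∧ G.Adj j l ∧ i ≠ l ∧ j ≠ k))

theorem IsOpposite.symm (h : IsOpposite G e f) : IsOpposite G f e := by
  obtain ⟨i, j, k, l, he, hf, hik, hjl, hil, hjk⟩ := h
  exact ⟨k, l, i, j, hf, he, hik.symm, hjl.symm, hjk.symm, hil.symm⟩

theorem IsOpposite.notMem (h : IsOpposite G e f) (hi : i ∈ e) : i ∉ f := by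
  obtain ⟨a, b, c, d, rfl, rfl, hac, hbd, had, hbc⟩ := h
  simp only [Sym2.mem_iff, not_or]
  rcases Sym2.mem_iff.1 hi with rfl | rfl
  · exact ⟨hac.ne, had⟩
  · exact ⟨hbc, hbd.ne⟩

theorem not_isOpposite_self : ¬ IsOpposite G e e := by
  induction e with | h i j =>
  exact fun h ↦ h.notMem (Sym2.mem_mk_left i j) (Sym2.mem_mk_left i j)

/-- The graph of vertices and edges of the edge polytope: two edges of `G` are joined unless they
are opposite. The pairs that are not edges of `G` are isolated vertices of it. -/
def skeleton (G : SimpleGraph V) : SimpleGraph (Sym2 V) where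
  Adj e f := e ∈ G.edgeSet ∧ f ∈ G.edgeSet ∧ e ≠ f ∧ ¬ IsOpposite G e f
  symm := ⟨fun _ _ ⟨he, hf, hne, hopp⟩ ↦ ⟨hf, he, hne.symm, mt IsOpposite.symm hopp⟩⟩
  loopless := ⟨fun _ h ↦ h.2.2.1 rfl⟩

instance [Fintype V] [DecidableEq V] [DecidableRel G.Adj] : DecidableRel (skeleton G).Adj :=
  fun e f ↦ inferInstanceAs
    (Decidable (e ∈ G.edgeSet ∧ f ∈ G.edgeSet ∧ e ≠ f ∧ ¬ IsOpposite G e f))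

theorem isFacial_singleton (he : e ∈ G.edgeSet) : IsFacial G {e} := by
  classical
  induction e with | h i j =>
  refine isFacial_of_forall_adj (singleton_nonempty _) (singleton_subset_iff.2 he)
    (fun x ↦ if x = i ∨ x = j then 1 else 0) (M := 2) (fun x y _ ↦ ?_) fun x y hxy ↦ ?_
  · split_ifs <;> norm_num
  · have := hxy.ne
    rw [mem_singleton_iff, Sym2.eq_iff]
    split_ifs <;> grind

theorem isFacial_pair_of_common_vertex (hij : G.Adj i j) (hik : G.Adj i k) :
    IsFacial G {s(i, j), s(i, k)} := by
  classical
  refine isFacial_of_forall_adj (insert_nonempty _ _) (pair_subset hij hik)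
    (fun x ↦ if x = i then 2 else if x = j ∨ x = k then 1 else 0) (M := 3)
    (fun x y hxy ↦ ?_) fun x y hxy ↦ ?_
  · have := hxy.ne
    split_ifs <;> grind
  · have := hxy.ne
    simp only [mem_insert_iff, mem_singleton_iff, Sym2.eq_iff]
    split_ifs <;> grind

theorem isFacial_pair_of_not_adj (hij : G.Adj i j) (hkl : G.Adj k l) (hjk : j ≠ k) (hjl : j ≠ l)
    (hik : ¬ G.Adj i k) (hil : ¬ G.Adj i l) : IsFacial G {s(i, j), s(k, l)} := by
  classical
  refine isFacial_of_forall_adj (insert_nonempty _ _) (pair_subset hij hkl)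
    (fun x ↦ if x = i then 3 else if x = j then 1 else if x = k ∨ x = l then 2 else 0) (M := 4)
    (fun x y hxy ↦ ?_) fun x y hxy ↦ ?_
  · have := hxy.ne
    have := hxy.symm
    split_ifs <;> grind
  · have := hxy.ne
    have := hxy.symm
    simp only [mem_insert_iff, mem_singleton_iff, Sym2.eq_iff]
    split_ifs <;> grind

/-- Of each of the two ways to join `s(i, j)` to `s(k, l)` by disjoint edges, one edge is missing,
and two edges missing from different ways share a vertex. -/
theorem isFacial_pair_of_disjoint (hij : G.Adj i j) (hkl : G.Adj k l) (hik : i ≠ k) (hil : i ≠ l)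
    (hjk : j ≠ k) (hjl : j ≠ l) (hopp : ¬ IsOpposite G s(i, j) s(k, l)) :
    IsFacial G {s(i, j), s(k, l)} := by
  have hparallel : ¬ G.Adj i k ∨ ¬ G.Adj j l := by
    rw [← not_and_or]
    exact fun h ↦ hopp ⟨i, j, k, l, rfl, rfl, h.1, h.2, hil, hjk⟩
  have hcross : ¬ G.Adj i l ∨ ¬ G.Adj j k := by
    rw [← not_and_or]
    exact fun h ↦ hopp ⟨i, j, l, k, rfl, Sym2.eq_swap, h.1, h.2, hik, hjl⟩
  rcases hparallel with hik' | hjl' <;> rcases hcross with hil' | hjk'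
  · exact isFacial_pair_of_not_adj hij hkl hjk hjl hik' hil'
  · rw [pair_comm]
    exact isFacial_pair_of_not_adj hkl hij hil.symm hjl.symm (mt .symm hik') (mt .symm hjk')
  · rw [pair_comm, Sym2.eq_swap (a := k)]
    exact isFacial_pair_of_not_adj hkl.symm hij hik.symm hjk.symm (mt .symm hil') (mt .symm hjl')
  · rw [Sym2.eq_swap (a := i)]
    exact isFacial_pair_of_not_adj hij.symm hkl hik hil hjk' hjl'

theorem isFacial_pair_of_not_isOpposite (he : e ∈ G.edgeSet) (hf : f ∈ G.edgeSet)
    (hopp : ¬ IsOpposite G e f) : IsFacial G {e, f} := by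
  by_cases hmem : ∃ i ∈ e, i ∈ f
  · obtain ⟨i, hie, hif⟩ := hmem
    obtain ⟨j, rfl⟩ := hie
    obtain ⟨k, rfl⟩ := hif
    exact isFacial_pair_of_common_vertex he hf
  · induction e with | h i j =>
    induction f with | h k l =>
    simp only [Sym2.mem_iff, exists_eq_or_imp, exists_eq_left, not_or] at hmem
    exact isFacial_pair_of_disjoint he hf hmem.1.1 hmem.1.2 hmem.2.1 hmem.2.2 hopp

theorem not_isOpposite_of_isFacial_pair (h : IsFacial G {e, f}) : ¬ IsOpposite G e f := by
  rintro ⟨i, j, k, l, rfl, rfl, hik, hjl, hil, hjk⟩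
  have hmem : s(i, k) ∈ ({s(i, j), s(k, l)} : Set (Sym2 V)) :=
    h.mem_of_adj (mem_insert _ _) (mem_insert_of_mem _ rfl) hik hjl
  simp only [mem_insert_iff, mem_singleton_iff, Sym2.eq_iff] at hmem
  grind

theorem isFacial_pair_iff (hef : e ≠ f) : IsFacial G {e, f} ↔ (skeleton G).Adj e f := by
  constructor
  · intro h
    exact ⟨h.subset_edgeSet (mem_insert _ _), h.subset_edgeSet (mem_insert_of_mem _ rfl), hef,
      not_isOpposite_of_isFacial_pair h⟩
  · rintro ⟨he, hf, -, hopp⟩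
    exact isFacial_pair_of_not_isOpposite he hf hopp

variable {n : ℕ} (G : SimpleGraph (Fin n)) [DecidableRel G.Adj]

theorem faceCount_edgePolytope_zero : faceCount (edgePolytope G) 0 = G.edgeFinset.card := by
  rw [faceCount_edgePolytope, ← ncard_coe_finset, SimpleGraph.coe_edgeFinset,
    ← ncard_image_of_injective G.edgeSet singleton_injective]
  refine congrArg ncard (Set.ext fun S ↦ ?_)
  simp only [mem_ofPred_eq, polyDim_image_edgeVec_eq_zero_iff, mem_image]
  constructor
  · rintro ⟨hS, hsub⟩
    obtain ⟨e, he⟩ := hS.1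
    exact ⟨e, hS.subset_edgeSet he, (hsub.eq_singleton_of_mem he).symm⟩
  · rintro ⟨e, he, rfl⟩
    exact ⟨isFacial_singleton he, subsingleton_singleton⟩

theorem faceCount_edgePolytope_one :
    faceCount (edgePolytope G) 1 = (skeleton G).edgeFinset.card := by
  rw [faceCount_edgePolytope, ← ncard_coe_finset, SimpleGraph.coe_edgeFinset,
    ← ncard_image_of_injective _ (SetLike.coe_injective (A := Sym2 (Sym2 (Fin n))))]
  refine congrArg ncard (Set.ext fun S ↦ ?_)
  simp only [mem_ofPred_eq, polyDim_image_edgeVec_eq_one_iff, mem_image]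
  constructor
  · rintro ⟨hS, e, f, hef, rfl⟩
    exact ⟨s(e, f), (isFacial_pair_iff hef).1 hS, Sym2.coe_mk⟩
  · rintro ⟨⟨e, f⟩, hadj, rfl⟩
    have hef : e ≠ f := (skeleton G).ne_of_adj hadj
    rw [Sym2.coe_mk]
    exact ⟨(isFacial_pair_iff hef).2 hadj, e, f, hef, rfl⟩

end Skeleton

section Degree

open Finset SimpleGraph

variable {V : Type*} [Fintype V] [DecidableEq V] {G : SimpleGraph V} [DecidableRel G.Adj]
  {e f : Sym2 V} {i j : V}

variable (G) in
/-- The edges of `G` opposite to a given one, that is, the edges to which it is not joined in the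
skeleton. -/
def oppositeEdges (e : Sym2 V) : Finset (Sym2 V) := {f ∈ G.edgeFinset | IsOpposite G e f}

theorem degree_skeleton_add_card_oppositeEdges_add_one (he : e ∈ G.edgeSet) :
    (skeleton G).degree e + #(oppositeEdges G e) + 1 = #G.edgeFinset := by
  have hN : (skeleton G).neighborFinset e = {f ∈ G.edgeFinset | ¬ IsOpposite G e f}.erase e := by
    ext f
    simp only [mem_neighborFinset, mem_erase, Finset.mem_filter, mem_edgeFinset]
    exact ⟨fun ⟨_, hf, hef, hopp⟩ ↦ ⟨hef.symm, hf, hopp⟩,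
      fun ⟨hef, hf, hopp⟩ ↦ ⟨he, hf, hef.symm, hopp⟩⟩
  have hmem : e ∈ ({f ∈ G.edgeFinset | ¬ IsOpposite G e f} : Finset (Sym2 V)) :=
    Finset.mem_filter.2 ⟨mem_edgeFinset.2 he, not_isOpposite_self⟩
  rw [← card_neighborFinset_eq_degree, hN, add_right_comm, card_erase_add_one hmem, add_comm,
    oppositeEdges, card_filter_add_card_filter_not]

theorem oppositeEdges_subset_image_interedges : oppositeEdges G s(i, j) ⊆
    (G.interedges ((G.neighborFinset i).erase j) ((G.neighborFinset j).erase i)).image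
      fun p ↦ s(p.1, p.2) := by
  intro f hf
  obtain ⟨hf, i', j', k, l, hij, rfl, hik, hjl, hil, hjk⟩ := Finset.mem_filter.1 hf
  rw [mem_edgeFinset, mem_edgeSet] at hf
  simp only [Finset.mem_image, mem_interedges_iff, mem_erase, mem_neighborFinset, Prod.exists]
  rcases Sym2.eq_iff.1 hij with ⟨rfl, rfl⟩ | ⟨rfl, rfl⟩
  · exact ⟨k, l, ⟨⟨hjk.symm, hik⟩, ⟨hil.symm, hjl⟩, hf⟩, rfl⟩
  · exact ⟨l, k, ⟨⟨hil.symm, hjl⟩, ⟨hjk.symm, hik⟩, hf.symm⟩, Sym2.eq_swap⟩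

theorem card_oppositeEdges_le_card_interedges : #(oppositeEdges G s(i, j)) ≤
    #(G.interedges ((G.neighborFinset i).erase j) ((G.neighborFinset j).erase i)) :=
  (Finset.card_le_card oppositeEdges_subset_image_interedges).trans card_image_le

theorem card_erase_neighborFinset (hij : G.Adj i j) :
    #((G.neighborFinset i).erase j) = G.degree i - 1 := by
  rw [card_erase_of_mem ((G.mem_neighborFinset i j).2 hij), card_neighborFinset_eq_degree]

theorem card_oppositeEdges_le (hij : G.Adj i j) :
    #(oppositeEdges G s(i, j)) ≤ (G.degree i - 1) * (G.degree j - 1) := by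
  rw [← card_erase_neighborFinset hij, ← card_erase_neighborFinset hij.symm]
  exact card_oppositeEdges_le_card_interedges.trans (G.card_interedges_le_mul _ _)

theorem oppositeEdges_subset_sdiff :
    oppositeEdges G s(i, j) ⊆ G.edgeFinset \ (G.incidenceFinset i ∪ G.incidenceFinset j) := by
  intro f hf
  obtain ⟨hf, hopp⟩ := Finset.mem_filter.1 hf
  simp only [Finset.mem_sdiff, Finset.mem_union, mem_incidenceFinset, not_or, hf, true_and]
  exact ⟨fun h ↦ hopp.notMem (Sym2.mem_mk_left i j) h.2,
    fun h ↦ hopp.notMem (Sym2.mem_mk_right i j) h.2⟩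

theorem card_incidenceFinset_union_add_one (hij : G.Adj i j) :
    #(G.incidenceFinset i ∪ G.incidenceFinset j) + 1 = G.degree i + G.degree j := by
  have hinter : G.incidenceFinset i ∩ G.incidenceFinset j = {s(i, j)} := by
    rw [← coe_inj, coe_inter, coe_incidenceFinset, coe_incidenceFinset, coe_singleton,
      G.incidenceSet_inter_incidenceSet_of_adj hij]
  rw [← card_incidenceFinset_eq_degree, ← card_incidenceFinset_eq_degree,
    ← card_union_add_card_inter, hinter, Finset.card_singleton]

theorem card_sdiff_incidenceFinset_add (hij : G.Adj i j) :
    #(G.edgeFinset \ (G.incidenceFinset i ∪ G.incidenceFinset j)) + (G.degree i + G.degree j) =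
      #G.edgeFinset + 1 := by
  rw [← card_incidenceFinset_union_add_one hij, ← add_assoc, card_sdiff_add_card_eq_card
    (union_subset (G.incidenceFinset_subset i) (G.incidenceFinset_subset j))]

theorem card_oppositeEdges_add_le (hij : G.Adj i j) :
    #(oppositeEdges G s(i, j)) + (G.degree i + G.degree j) ≤ #G.edgeFinset + 1 := by
  rw [← card_sdiff_incidenceFinset_add hij]
  gcongr
  exact oppositeEdges_subset_sdiff

theorem degree_add_degree_le (hij : G.Adj i j) :
    G.degree i + G.degree j ≤ (skeleton G).degree s(i, j) + 2 := by
  have := degree_skeleton_add_card_oppositeEdges_add_one (e := s(i, j)) hij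
  have := card_oppositeEdges_add_le hij
  lia

theorem pred_mul_pred_add {a b : ℕ} (ha : 0 < a) (hb : 0 < b) :
    (a - 1) * (b - 1) + (a + b) = a * b + 1 := by
  obtain ⟨a, rfl⟩ := Nat.exists_eq_add_of_le' ha
  obtain ⟨b, rfl⟩ := Nat.exists_eq_add_of_le' hb
  simp only [add_tsub_cancel_right]
  ring

theorem card_edgeFinset_add_le (hij : G.Adj i j) :
    #G.edgeFinset + (G.degree i + G.degree j) ≤
      (skeleton G).degree s(i, j) + 2 + G.degree i * G.degree j := by
  have := card_oppositeEdges_le hij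
  have := degree_skeleton_add_card_oppositeEdges_add_one (e := s(i, j)) hij
  have := pred_mul_pred_add hij.degree_pos_left hij.degree_pos_right
  lia

theorem four_mul_le_sq {a b d m : ℕ} (ha : 0 < a) (hb : 0 < b) (hd : a + b ≤ d)
    (hm : m + (a + b) ≤ d + a * b) : 4 * m ≤ d ^ 2 := by
  zify at *
  calc 4 * (m : ℤ) ≤ 4 * (d + a * b - (a + b)) := by linarith
    _ = d ^ 2 - (a - b) ^ 2 - (d - (a + b)) * (d + (a + b) - 4) := by ring
    _ ≤ d ^ 2 - 0 - 0 :=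
      sub_le_sub (sub_le_sub_left (sq_nonneg _) _) (mul_nonneg (by linarith) (by linarith))
    _ = d ^ 2 := by ring

theorem eq_of_four_mul_eq_sq {a b d m : ℕ} (ha : 0 < a) (hb : 0 < b) (hd : a + b ≤ d)
    (hm : m + (a + b) ≤ d + a * b) (h : 4 * m = d ^ 2) :
    a = b ∧ d = a + b ∧ m = a * b := by
  zify at *
  have hdiff : ((a : ℤ) - b) ^ 2 + (d - (a + b)) * (d + (a + b) - 4)
      + 4 * (d + a * b - (m + (a + b))) = 0 := by
    linear_combination -h
  have hsq : 0 ≤ ((a : ℤ) - b) ^ 2 := sq_nonneg _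
  have hmul : 0 ≤ ((d : ℤ) - (a + b)) * (d + (a + b) - 4) :=
    mul_nonneg (by linarith) (by linarith)
  have hab' : (a : ℤ) = b :=
    sub_eq_zero.1 (pow_eq_zero_iff two_ne_zero |>.1 (by linarith only [hdiff, hsq, hmul, hm]))
  have hd' : (d : ℤ) = a + b := by
    have hmul₀ : ((d : ℤ) - (a + b)) * (d + (a + b) - 4) = 0 := by
      linarith only [hdiff, hsq, hmul, hm]
    rcases mul_eq_zero.1 hmul₀ with h₀ | h₀ <;> linarith
  exact ⟨hab', hd', by linarith⟩

theorem four_mul_card_edgeFinset_le (he : e ∈ G.edgeSet) :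
    4 * #G.edgeFinset ≤ ((skeleton G).degree e + 2) ^ 2 := by
  induction e with | h i j =>
  exact four_mul_le_sq he.degree_pos_left he.degree_pos_right (degree_add_degree_le he)
    (card_edgeFinset_add_le he)

end Degree

section Biclique

open Finset SimpleGraph

variable {V : Type*} {G : SimpleGraph V} {s t : Finset V} {e : Sym2 V} {i j : V}

/-- `G` is, up to isolated vertices, a complete bipartite graph with two parts of equal size. -/
def IsBalancedBiclique (G : SimpleGraph V) : Prop :=
  ∃ s t : Finset V, G.IsBipartiteWith s t ∧ G.IsCompleteBetween s t ∧ #s = #t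

theorem isOpposite_of_isCompleteBetween (hst : G.IsBipartiteWith s t)
    (hcomp : G.IsCompleteBetween s t) (hi : i ∈ s) (hj : j ∈ t) {f : Sym2 V} (hf : f ∈ G.edgeSet)
    (hif : i ∉ f) (hjf : j ∉ f) : IsOpposite G s(i, j) f := by
  induction f with | h k l =>
  simp only [Sym2.mem_iff, not_or] at hif hjf
  rcases hst.mem_of_adj hf with ⟨hk, hl⟩ | ⟨hk, hl⟩
  · exact ⟨i, j, l, k, rfl, Sym2.eq_swap, hcomp hi hl, (hcomp hk hj).symm, hif.1, hjf.2⟩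
  · exact ⟨i, j, k, l, rfl, rfl, hcomp hi hk, (hcomp hl hj).symm, hif.2, hjf.1⟩

variable [Fintype V] [DecidableRel G.Adj]

theorem degree_of_isBipartiteWith_of_isCompleteBetween (hst : G.IsBipartiteWith s t)
    (hcomp : G.IsCompleteBetween s t) (hi : i ∈ s) : G.degree i = #t := by
  rw [← card_neighborFinset_eq_degree, isBipartiteWith_neighborFinset hst hi,
    filter_true_of_mem fun j hj ↦ hcomp hi hj]

theorem card_edgeFinset_of_isBipartiteWith_of_isCompleteBetween (hst : G.IsBipartiteWith s t)
    (hcomp : G.IsCompleteBetween s t) : #G.edgeFinset = #s * #t := by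
  rw [← isBipartiteWith_sum_degrees_eq_card_edges hst,
    sum_const_nat fun i hi ↦ degree_of_isBipartiteWith_of_isCompleteBetween hst hcomp hi]

theorem isBipartiteWith_of_card_edgeFinset_le (hcomp : G.IsCompleteBetween s t)
    (hcard : #G.edgeFinset ≤ #s * #t) : G.IsBipartiteWith s t := by
  classical
  have hdisj : Disjoint s t := disjoint_coe.1 hcomp.disjoint
  have hinj : InjOn (fun p : V × V ↦ s(p.1, p.2)) (s ×ˢ t : Finset (V × V)) := by
    rintro ⟨k, l⟩ hp ⟨k', l'⟩ hp' heq
    rw [mem_coe, Finset.mem_product] at hp hp'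
    rcases Sym2.eq_iff.1 heq with ⟨hk, hl⟩ | ⟨hk, -⟩
    · exact Prod.ext hk hl
    · exact absurd hp.1 (hk ▸ Finset.disjoint_right.1 hdisj hp'.2)
  have himage : (s ×ˢ t).image (fun p ↦ s(p.1, p.2)) = G.edgeFinset := by
    apply Finset.eq_of_subset_of_card_le
    · refine Finset.image_subset_iff.2 fun p hp ↦ mem_edgeFinset.2 ?_
      rw [Finset.mem_product] at hp
      exact hcomp hp.1 hp.2
    · rwa [card_image_of_injOn hinj, card_product]
  refine ⟨hcomp.disjoint, fun x y hxy ↦ ?_⟩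
  have hmem : s(x, y) ∈ (s ×ˢ t).image fun p ↦ s(p.1, p.2) := himage ▸ mem_edgeFinset.2 hxy
  obtain ⟨⟨k, l⟩, hp, heq⟩ := Finset.mem_image.1 hmem
  rw [Finset.mem_product] at hp
  rcases Sym2.eq_iff.1 heq with ⟨rfl, rfl⟩ | ⟨rfl, rfl⟩
  · exact Or.inl hp
  · exact Or.inr hp.symm

variable [DecidableEq V]

theorem card_oppositeEdges_of_isCompleteBetween (hst : G.IsBipartiteWith s t)
    (hcomp : G.IsCompleteBetween s t) (hi : i ∈ s) (hj : j ∈ t) :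
    #(oppositeEdges G s(i, j)) + (#s + #t) = #G.edgeFinset + 1 := by
  have hopp : oppositeEdges G s(i, j) =
      G.edgeFinset \ (G.incidenceFinset i ∪ G.incidenceFinset j) := by
    refine oppositeEdges_subset_sdiff.antisymm fun f hf ↦ ?_
    simp only [Finset.mem_sdiff, Finset.mem_union, mem_incidenceFinset, not_or,
      mem_edgeFinset] at hf
    obtain ⟨hf, hif, hjf⟩ := hf
    exact Finset.mem_filter.2 ⟨mem_edgeFinset.2 hf, isOpposite_of_isCompleteBetween hst hcomp hi hj
      hf (fun h ↦ hif ⟨hf, h⟩) fun h ↦ hjf ⟨hf, h⟩⟩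
  rw [← card_sdiff_incidenceFinset_add (hcomp hi hj), hopp,
    degree_of_isBipartiteWith_of_isCompleteBetween hst hcomp hi,
    degree_of_isBipartiteWith_of_isCompleteBetween hst.symm hcomp.symm hj, add_comm #s]

theorem degree_skeleton_of_isCompleteBetween (hst : G.IsBipartiteWith s t)
    (hcomp : G.IsCompleteBetween s t) (he : e ∈ G.edgeSet) :
    (skeleton G).degree e + 2 = #s + #t := by
  have hdeg := degree_skeleton_add_card_oppositeEdges_add_one he
  have hopp : #(oppositeEdges G e) + (#s + #t) = #G.edgeFinset + 1 := by
    induction e with | h i j =>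
    rcases hst.mem_of_adj he with ⟨hi, hj⟩ | ⟨hi, hj⟩
    · exact card_oppositeEdges_of_isCompleteBetween hst hcomp hi hj
    · rw [Sym2.eq_swap]
      exact card_oppositeEdges_of_isCompleteBetween hst hcomp hj hi
  lia

theorem isCompleteBetween_neighborFinset (hij : G.Adj i j)
    (hopp : (G.degree i - 1) * (G.degree j - 1) ≤ #(oppositeEdges G s(i, j))) :
    G.IsCompleteBetween (G.neighborFinset i) (G.neighborFinset j) := by
  have hcard : #((G.neighborFinset i).erase j ×ˢ (G.neighborFinset j).erase i) ≤
      #(G.interedges ((G.neighborFinset i).erase j) ((G.neighborFinset j).erase i)) := by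
    rw [card_product, card_erase_neighborFinset hij, card_erase_neighborFinset hij.symm]
    exact hopp.trans card_oppositeEdges_le_card_interedges
  have hadj := card_filter_eq_iff.1 ((card_filter_le _ _).antisymm hcard)
  intro k hik l hjl
  rw [mem_coe, mem_neighborFinset] at hik hjl
  by_cases hkj : k = j
  · rwa [hkj]
  by_cases hli : l = i
  · rw [hli]
    exact hik.symm
  · exact hadj (k, l) (by simp [hkj, hli, hik, hjl])

theorem isBalancedBiclique_of_four_mul_card_eq (he : e ∈ G.edgeSet)
    (h : 4 * #G.edgeFinset = ((skeleton G).degree e + 2) ^ 2) : IsBalancedBiclique G := by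
  induction e with | h i j =>
  obtain ⟨hij, hdeg, hcard⟩ := eq_of_four_mul_eq_sq he.degree_pos_left he.degree_pos_right
    (degree_add_degree_le he) (card_edgeFinset_add_le he) h
  have hopp : (G.degree i - 1) * (G.degree j - 1) ≤ #(oppositeEdges G s(i, j)) := by
    have := degree_skeleton_add_card_oppositeEdges_add_one (e := s(i, j)) he
    have := pred_mul_pred_add he.degree_pos_left he.degree_pos_right
    lia
  have hcomp : G.IsCompleteBetween (G.neighborFinset i) (G.neighborFinset j) :=
    isCompleteBetween_neighborFinset he hopp
  exact ⟨_, _, isBipartiteWith_of_card_edgeFinset_le hcomp hcard.le, hcomp, hij⟩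

theorem four_mul_card_edgeFinset_eq_iff (he : e ∈ G.edgeSet) :
    4 * #G.edgeFinset = ((skeleton G).degree e + 2) ^ 2 ↔ IsBalancedBiclique G := by
  refine ⟨isBalancedBiclique_of_four_mul_card_eq he, ?_⟩
  rintro ⟨s, t, hst, hcomp, hcard⟩
  rw [degree_skeleton_of_isCompleteBetween hst hcomp he,
    card_edgeFinset_of_isBipartiteWith_of_isCompleteBetween hst hcomp, hcard]
  ring

end Biclique

section SkeletonSize

open Finset SimpleGraph

theorem rpow_three_halves_sub_eq {x : ℝ} (hx : 0 ≤ x) :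
    2 * (x ^ ((3 : ℝ) / 2) - x) = x * (2 * √x - 2) := by
  rw [show (3 : ℝ) / 2 = 1 + 1 / 2 by norm_num,
    Real.rpow_add_of_nonneg hx zero_le_one one_half_pos.le, Real.rpow_one, ← Real.sqrt_eq_rpow]
  ring

variable {V : Type*} [Fintype V] [DecidableEq V] (G : SimpleGraph V) [DecidableRel G.Adj]
  {e : Sym2 V}

theorem sum_degree_skeleton :
    ∑ e ∈ G.edgeFinset, (skeleton G).degree e = 2 * #(skeleton G).edgeFinset := by
  rw [← sum_degrees_eq_twice_card_edges]
  refine sum_subset (subset_univ _) fun e _ he ↦ ?_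
  rw [degree_eq_zero]
  exact fun f hef ↦ he (mem_edgeFinset.2 hef.1)

variable {G} in
theorem two_mul_sqrt_sub_two_le_degree_skeleton (he : e ∈ G.edgeSet) :
    2 * √(#G.edgeFinset : ℝ) - 2 ≤ (skeleton G).degree e := by
  have hsq : (4 * #G.edgeFinset : ℝ) ≤ ((skeleton G).degree e + 2) ^ 2 := by
    exact_mod_cast four_mul_card_edgeFinset_le he
  have hsqrt : √(#G.edgeFinset : ℝ) ≤ ((skeleton G).degree e + 2) / 2 :=
    Real.sqrt_le_iff.2 ⟨by positivity, by linarith⟩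
  linarith

variable {G} in
theorem two_mul_sqrt_sub_two_eq_degree_skeleton_iff (he : e ∈ G.edgeSet) :
    2 * √(#G.edgeFinset : ℝ) - 2 = (skeleton G).degree e ↔ IsBalancedBiclique G := by
  calc 2 * √(#G.edgeFinset : ℝ) - 2 = (skeleton G).degree e
    _ ↔ √(#G.edgeFinset : ℝ) = ((skeleton G).degree e + 2) / 2 := by
      rw [sub_eq_iff_eq_add, eq_div_iff two_ne_zero, mul_comm]
    _ ↔ (#G.edgeFinset : ℝ) = (((skeleton G).degree e + 2) / 2) ^ 2 :=
      Real.sqrt_eq_iff_eq_sq (by positivity) (by positivity)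
    _ ↔ (4 * #G.edgeFinset : ℝ) = ((skeleton G).degree e + 2) ^ 2 := by
      constructor <;> intro h <;> linarith
    _ ↔ 4 * #G.edgeFinset = ((skeleton G).degree e + 2) ^ 2 := by norm_cast
    _ ↔ IsBalancedBiclique G := four_mul_card_edgeFinset_eq_iff he

theorem two_mul_card_edgeFinset_skeleton :
    2 * (#(skeleton G).edgeFinset : ℝ) = ∑ e ∈ G.edgeFinset, ((skeleton G).degree e : ℝ) := by
  exact_mod_cast (sum_degree_skeleton G).symm

theorem rpow_three_halves_sub_le_card_edgeFinset_skeleton :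
    (#G.edgeFinset : ℝ) ^ ((3 : ℝ) / 2) - #G.edgeFinset ≤ #(skeleton G).edgeFinset := by
  rw [← mul_le_mul_iff_right₀ (two_pos (α := ℝ)), rpow_three_halves_sub_eq (Nat.cast_nonneg _),
    two_mul_card_edgeFinset_skeleton, ← nsmul_eq_mul, ← sum_const]
  exact sum_le_sum fun e he ↦ two_mul_sqrt_sub_two_le_degree_skeleton (mem_edgeFinset.1 he)

theorem rpow_three_halves_sub_eq_card_edgeFinset_skeleton_iff :
    (#G.edgeFinset : ℝ) ^ ((3 : ℝ) / 2) - #G.edgeFinset = #(skeleton G).edgeFinset ↔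
      IsBalancedBiclique G := by
  rw [← mul_right_inj' (two_ne_zero (α := ℝ)), rpow_three_halves_sub_eq (Nat.cast_nonneg _),
    two_mul_card_edgeFinset_skeleton, ← nsmul_eq_mul, ← sum_const, sum_eq_sum_iff_of_le fun e he ↦
      two_mul_sqrt_sub_two_le_degree_skeleton (mem_edgeFinset.1 he)]
  constructor
  · intro h
    rcases G.edgeFinset.eq_empty_or_nonempty with hE | ⟨e, he⟩
    · exact ⟨∅, ∅, ⟨by simp, by simp [edgeFinset_eq_empty.1 hE]⟩, by simp [IsCompleteBetween], rfl⟩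
    · exact (two_mul_sqrt_sub_two_eq_degree_skeleton_iff (mem_edgeFinset.1 he)).1 (h e he)
  · intro h e he
    exact (two_mul_sqrt_sub_two_eq_degree_skeleton_iff (mem_edgeFinset.1 he)).2 h

end SkeletonSize

section Iso

open Finset SimpleGraph

variable {V : Type*} {G : SimpleGraph V}

theorem isBalancedBiclique_of_iso {m : ℕ} (φ : G ≃g completeBipartiteGraph (Fin m) (Fin m)) :
    IsBalancedBiclique G := by
  let left : Fin m ↪ V := Function.Embedding.inl.trans φ.symm.toEquiv.toEmbedding
  let right : Fin m ↪ V := Function.Embedding.inr.trans φ.symm.toEquiv.toEmbedding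
  have hmem_left {v : V} : v ∈ univ.map left ↔ (φ v).isLeft := by
    obtain ⟨x | x, rfl⟩ := φ.symm.surjective v <;> simp [left]
  have hmem_right {v : V} : v ∈ univ.map right ↔ (φ v).isRight := by
    obtain ⟨x | x, rfl⟩ := φ.symm.surjective v <;> simp [right]
  have hadj {v w : V} : G.Adj v w ↔
      v ∈ univ.map left ∧ w ∈ univ.map right ∨ v ∈ univ.map right ∧ w ∈ univ.map left := by
    simp only [hmem_left, hmem_right, ← φ.map_adj_iff, completeBipartiteGraph_adj]
  refine ⟨univ.map left, univ.map right, ⟨?_, fun v w hvw ↦ hadj.1 hvw⟩,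
    fun v hv w hw ↦ hadj.2 (Or.inl ⟨hv, hw⟩), by rw [card_map, card_map]⟩
  rw [disjoint_coe, Finset.disjoint_left]
  intro v hv
  rwa [hmem_right, Sum.not_isRight, ← hmem_left]

theorem nonempty_iso_of_isBipartiteWith_of_isCompleteBetween {s t : Set V}
    (hiso : ∀ v, ∃ w, G.Adj v w) (hst : G.IsBipartiteWith s t) (hcomp : G.IsCompleteBetween s t) :
    Nonempty (G ≃g completeBipartiteGraph s t) := by
  have hinj : Function.Injective (Sum.elim (Subtype.val : s → V) (Subtype.val : t → V)) :=
    Subtype.val_injective.sumElim Subtype.val_injective fun v w ↦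
      hst.disjoint.ne_of_mem v.2 w.2
  have hsurj : Function.Surjective (Sum.elim (Subtype.val : s → V) (Subtype.val : t → V)) := by
    intro v
    obtain ⟨w, hvw⟩ := hiso v
    rcases hst.mem_of_adj hvw with ⟨hv, -⟩ | ⟨hv, -⟩
    · exact ⟨Sum.inl ⟨v, hv⟩, rfl⟩
    · exact ⟨Sum.inr ⟨v, hv⟩, rfl⟩
  have hadj {v w : V} : G.Adj v w ↔ v ∈ s ∧ w ∈ t ∨ v ∈ t ∧ w ∈ s :=
    ⟨fun hvw ↦ hst.mem_of_adj hvw,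
      Or.rec (fun h ↦ hcomp h.1 h.2) fun h ↦ (hcomp h.2 h.1).symm⟩
  have hbij : Function.Bijective (Sum.elim (Subtype.val : s → V) (Subtype.val : t → V)) :=
    ⟨hinj, hsurj⟩
  have hdisj := Set.disjoint_left.1 hst.disjoint
  refine ⟨RelIso.symm ⟨Equiv.ofBijective _ hbij, fun {x y} ↦ ?_⟩⟩
  rw [Equiv.ofBijective_apply, Equiv.ofBijective_apply, hadj]
  rcases x with ⟨v, hv⟩ | ⟨v, hv⟩ <;> rcases y with ⟨w, hw⟩ | ⟨w, hw⟩ <;>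
    simp only [Sum.elim_inl, Sum.elim_inr, completeBipartiteGraph_adj, Sum.isLeft_inl,
      Sum.isLeft_inr, Sum.isRight_inl, Sum.isRight_inr] <;> grind

theorem isBalancedBiclique_iff_exists_iso (hiso : ∀ v, ∃ w, G.Adj v w) :
    IsBalancedBiclique G ↔
      ∃ m : ℕ, Nonempty (G ≃g completeBipartiteGraph (Fin m) (Fin m)) := by
  constructor
  · rintro ⟨s, t, hst, hcomp, hcard⟩
    obtain ⟨φ⟩ := nonempty_iso_of_isBipartiteWith_of_isCompleteBetween hiso hst hcomp
    exact ⟨#s, ⟨φ.trans (completeBipartiteGraphCongr s.equivFin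
      (t.equivFinOfCardEq hcard.symm))⟩⟩
  · rintro ⟨m, ⟨φ⟩⟩
    exact isBalancedBiclique_of_iso φ

end Iso

end EdgePolytope

theorem f1_lower_bound_general {n : ℕ} (G : SimpleGraph (Fin n)) :
    (faceCount (edgePolytope G) 0 : ℝ) ^ ((3 : ℝ) / 2) - (faceCount (edgePolytope G) 0 : ℝ)
        ≤ (faceCount (edgePolytope G) 1 : ℝ) ∧
      ((faceCount (edgePolytope G) 0 : ℝ) ^ ((3 : ℝ) / 2)
            - (faceCount (edgePolytope G) 0 : ℝ) = (faceCount (edgePolytope G) 1 : ℝ) ↔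
        EdgePolytope.IsBalancedBiclique G) := by
  classical
  rw [EdgePolytope.faceCount_edgePolytope_zero, EdgePolytope.faceCount_edgePolytope_one]
  exact ⟨EdgePolytope.rpow_three_halves_sub_le_card_edgeFinset_skeleton G,
    EdgePolytope.rpow_three_halves_sub_eq_card_edgeFinset_skeleton_iff G⟩

/-- If `f₀` and `f₁` denote the number of vertices resp. edges of the edge polytope
`P(G)` of a graph `G` with no isolated vertices, then `f₀^(3/2) - f₀ ≤ f₁`, with
equality if and only if `G` is a complete bipartite graph with parts of equal size. -/
theorem f1_lower_bound {n : ℕ} (G : SimpleGraph (Fin n))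
    (hiso : ∀ v : Fin n, ∃ w : Fin n, G.Adj v w) :
    (faceCount (edgePolytope G) 0 : ℝ) ^ ((3 : ℝ) / 2) - (faceCount (edgePolytope G) 0 : ℝ)
        ≤ (faceCount (edgePolytope G) 1 : ℝ) ∧
      ((faceCount (edgePolytope G) 0 : ℝ) ^ ((3 : ℝ) / 2)
            - (faceCount (edgePolytope G) 0 : ℝ) = (faceCount (edgePolytope G) 1 : ℝ) ↔
        ∃ m : ℕ, Nonempty (G ≃g completeBipartiteGraph (Fin m) (Fin m))) := by
  rw [← EdgePolytope.isBalancedBiclique_iff_exists_iso hiso]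
  exact f1_lower_bound_general G
end

section
/- Let k ≥ 2 and let G be a finite simple graph with no isolated vertices and at least k edges. The edge polytope P(G) is k-neighborly if and only if every subgraph H of G with at most 2k vertices has the property that every cycle of H is odd and every connected component of H contains at most one cycle. -/
open Set

/-- A polytope `P` is `k`-neighborly if every set of at most `k` of its vertices
(extreme points) is the vertex set of a face of `P`, a face being the intersection of
`P` with a supporting hyperplane (`IsExposed`), together with `∅` and `P` itself. -/
def KNeighborly {n : ℕ} (P : Set (Fin n → ℝ)) (k : ℕ) : Prop :=
  ∀ S : Set (Fin n → ℝ), S ⊆ Set.extremePoints ℝ P → S.Finite → S.ncard ≤ k →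
    ∃ F : Set (Fin n → ℝ), IsExposed ℝ P F ∧ F ∩ Set.extremePoints ℝ P = S

/-- Every cycle of `H` is odd, and every connected component of `H` contains at most
one cycle (any two cycles lying in the same component have the same edge set). -/
def CactusLike {V : Type*} (H : SimpleGraph V) : Prop :=
  (∀ (v : V) (c : H.Walk v v), c.IsCycle → Odd c.length) ∧
  (∀ (u v : V) (c : H.Walk u u) (d : H.Walk v v), c.IsCycle → d.IsCycle →
    H.Reachable u v → ∀ e : Sym2 V, e ∈ c.edges ↔ e ∈ d.edges)

/-!
All edge vectors lie on the hyperplane where the coordinates sum to `2`, so a set `S` of edges is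
the vertex set of a face of `P(G)` iff some linear functional vanishes on `S` and is negative on the
other edges.

If `P(G)` is `k`-neighborly, then any `2k + 1` edge vectors are linearly independent: up to sign, a
linear dependence has at most `k` positive coefficients; the functional cutting out those edges
shows that no coefficient is negative, and then all of them vanish because their sum does. The edges
within a set of `2k` vertices span a space of dimension at most `2k`, so there are at most `2k` of
them and they are independent. Conversely, `k` edges have at most `2k` ends; independence of the
edges within these ends allows prescribing a functional there, and sufficiently negative weights on
the remaining vertices take care of all other edges.

The edge vectors of a graph are independent iff each edge can be isolated by a vertex weighting
which changes sign along every other edge. Such a weighting takes opposite values at the ends of a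
walk of odd length, so no edge of an even cycle can be isolated; it vanishes on a component
containing an odd cycle, so a second cycle in that component cannot have an edge outside the first.
In the absence of these obstructions, the `±1` weighting of a component without cycles isolates the
deleted edge.
-/

section LinearAlgebra

variable {K ι E : Type*} [Field K] [AddCommGroup E] [Module K E] {v : ι → E} {s : Set ι}

theorem exists_dual_apply_eq_of_linearIndepOn (hs : LinearIndepOn K v s) (f : ι → K) :
    ∃ l : Module.Dual K E, ∀ i ∈ s, l (v i) = f i := by
  obtain ⟨l, hl⟩ := (Finsupp.linearCombination K (fun i : s ↦ f i) ∘ₗ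
    hs.linearIndependent.repr).exists_extend
  refine ⟨l, fun i hi ↦ ?_⟩
  have hvi := LinearMap.congr_fun hl ⟨v i, Submodule.subset_span ⟨⟨i, hi⟩, rfl⟩⟩
  simpa [hs.linearIndependent.repr_eq_single ⟨i, hi⟩] using hvi

theorem linearIndepOn_iff_forall_exists_dual :
    LinearIndepOn K v s ↔
      ∀ i ∈ s, ∃ l : Module.Dual K E, l (v i) ≠ 0 ∧ ∀ j ∈ s, j ≠ i → l (v j) = 0 := by
  rw [linearIndepOn_iff_notMem_span]
  refine forall₂_congr fun i _ ↦ ⟨fun hi ↦ ?_, fun ⟨l, hli, hl⟩ hi ↦ hli ?_⟩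
  · obtain ⟨l, hli, hl⟩ := Submodule.exists_le_ker_of_notMem hi
    exact ⟨l, hli, fun j hj hji ↦ hl (Submodule.subset_span ⟨j, ⟨hj, hji⟩, rfl⟩)⟩
  · refine (Submodule.span_le (p := LinearMap.ker l)).2 ?_ hi
    rintro _ ⟨j, ⟨hj, hji⟩, rfl⟩
    exact hl j hj hji

theorem linearIndepOn_of_forall_finset_card_le {W : Submodule K E} [FiniteDimensional K W]
    (hW : ∀ i ∈ s, v i ∈ W)
    (h : ∀ T : Finset ι, ↑T ⊆ s → T.card ≤ Module.finrank K W + 1 → LinearIndepOn K v ↑T) :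
    LinearIndepOn K v s := by
  have card_le (T : Finset ι) (hT : ↑T ⊆ s) (hli : LinearIndepOn K v ↑T) :
      T.card ≤ Module.finrank K W := by
    have hspan : Submodule.span K (Set.range fun i : (T : Set ι) ↦ v i) ≤ W := by
      refine Submodule.span_le.2 ?_
      rintro _ ⟨i, rfl⟩
      exact hW i (hT i.2)
    have hrank := (finrank_span_eq_card hli).symm.trans_le (Submodule.finrank_mono hspan)
    simpa using hrank
  refine linearIndepOn_of_finite s fun t hts ht ↦ ?_
  lift t to Finset ι using ht
  refine h t hts (not_lt.1 fun hlt ↦ ?_)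
  obtain ⟨T, hTt, hT⟩ := Finset.exists_subset_card_eq hlt.le
  have hTs := (Finset.coe_subset.2 hTt).trans hts
  have := card_le T hTs (h T hTs hT.le)
  lia

end LinearAlgebra

section CutOut

variable {ι E : Type*} [AddCommGroup E] [Module ℝ E] {v : ι → E} {s t : Set ι} {k : ℕ}

/-- A linear hyperplane contains the vectors `v i` with `i ∈ s` and has all the other `v i` with
`i ∈ t` strictly on its negative side. When the vectors lie on an affine hyperplane avoiding the
origin, this says that `s` indexes a face of their convex hull; linear functionals then suffice, and
the empty face needs no special treatment. -/
def IsCutOut (v : ι → E) (t s : Set ι) : Prop :=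
  ∃ l : Module.Dual ℝ E, (∀ i ∈ s, l (v i) = 0) ∧ ∀ i ∈ t \ s, l (v i) < 0

theorem IsCutOut.mono {t' : Set ι} (h : IsCutOut v t s) (ht : t' ⊆ t) : IsCutOut v t' s :=
  let ⟨l, hl₀, hl⟩ := h
  ⟨l, hl₀, fun i hi ↦ hl i ⟨ht hi.1, hi.2⟩⟩

theorem IsCutOut.nonneg_of_sum_smul_eq_zero {T : Finset ι} {g : ι → ℝ}
    (hT : IsCutOut v T ↑(T.filter (0 < g ·))) (hg : ∑ i ∈ T, g i • v i = 0) :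
    ∀ i ∈ T, 0 ≤ g i := by
  obtain ⟨l, hl₀, hl⟩ := hT
  have hneg : ∀ i ∈ T, ¬ 0 < g i → l (v i) < 0 := fun i hi hgi ↦ hl i (by simp [hi, hgi])
  have hterm : ∀ i ∈ T, 0 ≤ g i * l (v i) := fun i hi ↦ by
    by_cases hgi : 0 < g i
    · rw [hl₀ i (by simp [hi, hgi]), mul_zero]
    · exact mul_nonneg_of_nonpos_of_nonpos (not_lt.1 hgi) (hneg i hi hgi).le
  have hsum : ∑ i ∈ T, g i * l (v i) = 0 := by simpa using congrArg l hg
  intro i hi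
  by_contra! hgi
  exact (mul_pos_of_neg_of_neg hgi (hneg i hi hgi.le.not_gt)).ne'
    ((Finset.sum_eq_zero_iff_of_nonneg hterm).1 hsum i hi)

theorem IsCutOut.eq_zero_of_sum_smul_eq_zero {T : Finset ι} {g : ι → ℝ} (h : IsCutOut v T ∅)
    (hg₀ : ∀ i ∈ T, 0 ≤ g i) (hg : ∑ i ∈ T, g i • v i = 0) : ∀ i ∈ T, g i = 0 := by
  obtain ⟨l, -, hl⟩ := h
  have hneg : ∀ i ∈ T, l (v i) < 0 := fun i hi ↦ hl i ⟨hi, id⟩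
  have hsum : ∑ i ∈ T, g i * l (v i) = 0 := by simpa using congrArg l hg
  intro i hi
  refine (mul_eq_zero.1 ?_).resolve_right (hneg i hi).ne
  exact (Finset.sum_eq_zero_iff_of_nonpos fun j hj ↦
    mul_nonpos_of_nonneg_of_nonpos (hg₀ j hj) (hneg j hj).le).1 hsum i hi

theorem linearIndepOn_of_forall_isCutOut {T : Finset ι} (hT : T.card ≤ 2 * k + 1)
    (h : ∀ s ⊆ (T : Set ι), s.ncard ≤ k → IsCutOut v T s) : LinearIndepOn ℝ v ↑T := by
  have eq_zero (g : ι → ℝ) (hg : ∑ i ∈ T, g i • v i = 0)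
      (hk : (T.filter (0 < g ·)).card ≤ k) : ∀ i ∈ T, g i = 0 :=
    (h ∅ (empty_subset _) (by simp)).eq_zero_of_sum_smul_eq_zero
      ((h _ (Finset.coe_subset.2 (T.filter_subset _)) (by rwa [ncard_coe_finset]))
        |>.nonneg_of_sum_smul_eq_zero hg) hg
  refine linearIndepOn_finset_iff.2 fun g hg ↦ ?_
  by_cases hk : (T.filter (0 < g ·)).card ≤ k
  · exact eq_zero g hg hk
  · have hcard := T.card_filter_add_card_filter_not (0 < g ·)
    have hle : (T.filter (0 < (-g) ·)).card ≤ (T.filter (¬ 0 < g ·)).card :=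
      Finset.card_le_card (Finset.monotone_filter_right T fun i _ hi ↦ by
        simp only [Pi.neg_apply, neg_pos] at hi
        exact hi.not_gt)
    simpa using eq_zero (-g) (by simpa using hg) (by lia)

section Topology

variable [TopologicalSpace E] {σ : Module.Dual ℝ E}

theorem isCutOut_of_isExposed_convexHull (hinj : InjOn v t) (hst : s ⊆ t)
    (hσ : ∀ i ∈ t, σ (v i) = 1) {F : Set E} (hF : IsExposed ℝ (convexHull ℝ (v '' t)) F)
    (hFs : F ∩ v '' t = v '' s) : IsCutOut v t s := by
  obtain rfl | ⟨i₀, hi₀⟩ := s.eq_empty_or_nonempty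
  · exact ⟨-σ, by simp, fun i hi ↦ by simp [hσ i hi.1]⟩
  have hmem : ∀ i ∈ t, v i ∈ convexHull ℝ (v '' t) := fun i hi ↦
    subset_convexHull ℝ _ (mem_image_of_mem v hi)
  have hsF : ∀ i ∈ s, v i ∈ F := fun i hi ↦ (hFs.superset (mem_image_of_mem v hi)).1
  obtain ⟨l, rfl⟩ := hF ⟨_, hsF i₀ hi₀⟩
  have hmax : ∀ i ∈ t, l (v i) ≤ l (v i₀) := fun i hi ↦ (hsF i₀ hi₀).2 _ (hmem i hi)
  refine ⟨l.toLinearMap - l (v i₀) • σ, fun i hi ↦ ?_, fun i hi ↦ ?_⟩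
  · have heq := (hmax i (hst hi)).antisymm ((hsF i hi).2 _ (hmem i₀ (hst hi₀)))
    simp [hσ i (hst hi), heq]
  · have hlt : l (v i) < l (v i₀) := (hmax i hi.1).lt_of_ne fun heq ↦ hi.2 <|
      (hinj.mem_image_iff hst hi.1).1 <| hFs.subset
        ⟨⟨hmem i hi.1, fun y hy ↦ heq ▸ (hsF i₀ hi₀).2 y hy⟩, mem_image_of_mem v hi.1⟩
    simpa [hσ i hi.1] using hlt

theorem IsCutOut.exists_isExposed_convexHull [IsTopologicalAddGroup E] [ContinuousSMul ℝ E]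
    [T2Space E] [FiniteDimensional ℝ E] (h : IsCutOut v t s) (hst : s ⊆ t) :
    ∃ F, IsExposed ℝ (convexHull ℝ (v '' t)) F ∧ F ∩ v '' t = v '' s := by
  obtain rfl | ⟨i₀, hi₀⟩ := s.eq_empty_or_nonempty
  · exact ⟨∅, isExposed_empty, by simp⟩
  obtain ⟨l, hl₀, hl⟩ := h
  have hmem : ∀ i ∈ t, v i ∈ convexHull ℝ (v '' t) := fun i hi ↦
    subset_convexHull ℝ _ (mem_image_of_mem v hi)
  have hnonpos : ∀ y ∈ convexHull ℝ (v '' t), l y ≤ 0 := by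
    refine fun y hy ↦ convexHull_min (t := {y | l y ≤ 0}) ?_ (convex_halfSpace_le l.isLinear 0) hy
    rintro _ ⟨i, hi, rfl⟩
    by_cases his : i ∈ s
    · exact (hl₀ i his).le
    · exact (hl i ⟨hi, his⟩).le
  refine ⟨(LinearMap.toContinuousLinearMap l).toExposed (convexHull ℝ (v '' t)),
    ContinuousLinearMap.toExposed.isExposed, Subset.antisymm ?_ ?_⟩
  · rintro _ ⟨⟨-, hx⟩, i, hi, rfl⟩
    refine mem_image_of_mem v (by_contra fun his ↦ ?_)
    exact ((hl₀ i₀ hi₀).symm.trans_le (hx _ (hmem i₀ (hst hi₀)))).not_gt (hl i ⟨hi, his⟩)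
  · rintro _ ⟨i, hi, rfl⟩
    exact ⟨⟨hmem i (hst hi), fun y hy ↦ (hnonpos y hy).trans (hl₀ i hi).ge⟩, i, hst hi, rfl⟩

end Topology

end CutOut

section Alternating

open SimpleGraph

variable {V R : Type*} [CommRing R] {G : SimpleGraph V} {w : V → R} {a b u x y : V}

/-- A vertex weighting is alternating if the weights of adjacent vertices are opposite.
Equivalently, the linear functional taking these values on the unit vectors vanishes on all edge
vectors. -/
def IsAlternatingWeight (G : SimpleGraph V) (w : V → R) : Prop :=
  ∀ ⦃x y⦄, G.Adj x y → w x + w y = 0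

theorem IsAlternatingWeight.apply_eq_neg_one_pow_mul (hw : IsAlternatingWeight G w)
    (p : G.Walk x y) : w y = (-1) ^ p.length * w x := by
  induction p with
  | nil => simp
  | cons h p ih =>
    rw [ih, Walk.length_cons, pow_succ]
    linear_combination (-1) ^ p.length * hw h

theorem IsAlternatingWeight.apply_eq_zero_of_odd_length [NoZeroDivisors R] [NeZero (2 : R)]
    (hw : IsAlternatingWeight G w) {c : G.Walk u u} (hc : Odd c.length) (hux : G.Reachable u x) :
    w x = 0 := by
  obtain ⟨p⟩ := hux
  have hneg := hw.apply_eq_neg_one_pow_mul c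
  rw [hc.neg_one_pow] at hneg
  have hu : w u = 0 :=
    (mul_eq_zero.1 (show (2 : R) * w u = 0 by linear_combination hneg)).resolve_left two_ne_zero
  rw [hw.apply_eq_neg_one_pow_mul p, hu, mul_zero]

theorem exists_isAlternatingWeight_of_colorable_two (R : Type*) [CommRing R] [Nontrivial R]
    (C : G.ConnectedComponent) (hC : C.toSimpleGraph.Colorable 2) :
    ∃ w : V → R, IsAlternatingWeight G w ∧ ∀ x, w x ≠ 0 ↔ x ∈ C := by
  classical
  obtain ⟨col⟩ := hC
  refine ⟨fun x ↦ if hx : x ∈ C then (-1) ^ (col ⟨x, hx⟩ : ℕ) else 0, fun x y hxy ↦ ?_,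
    fun x ↦ by simp [(isUnit_one.neg.pow _).ne_zero]⟩
  have hsum : ∀ i j : Fin 2, i ≠ j → (-1 : R) ^ (i : ℕ) + (-1) ^ (j : ℕ) = 0 := by
    simp [Fin.forall_fin_two]
  have hiff : x ∈ C ↔ y ∈ C := C.mem_supp_congr_adj hxy
  by_cases hx : x ∈ C
  · simp only [hx, hiff.1 hx, dif_pos]
    exact hsum _ _ (col.valid hxy)
  · simp [hx, mt hiff.2 hx]

theorem exists_isCycle_of_not_isAcyclic_toSimpleGraph
    (hu : ¬ (G.connectedComponentMk u).toSimpleGraph.IsAcyclic) :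
    ∃ x, ∃ c : G.Walk x x, c.IsCycle ∧ G.Reachable u x := by
  simp only [IsAcyclic, not_forall, not_not] at hu
  obtain ⟨x, c, hc⟩ := hu
  exact ⟨x, c.map (G.connectedComponentMk u).toSimpleGraph_hom,
    hc.map Subtype.val_injective, (ConnectedComponent.exact x.2).symm⟩

theorem reachable_deleteEdges_of_reachable (hab : (G.deleteEdges {s(a, b)}).Reachable a b)
    (h : G.Reachable x y) : (G.deleteEdges {s(a, b)}).Reachable x y := by
  obtain ⟨p⟩ := h
  induction p with
  | nil => exact .rfl
  | @cons x y _ h _ ih =>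
    refine Reachable.trans ?_ ih
    by_cases he : s(x, y) = s(a, b)
    · obtain ⟨rfl, rfl⟩ | ⟨rfl, rfl⟩ := Sym2.eq_iff.1 he
      · exact hab
      · exact hab.symm
    · exact Adj.reachable (by simp [h, he])

/-- Each edge of `G` has a vertex weighting whose edge sums vanish on all other edges but not on
it. Dually, the edge vectors of `G` are linearly independent over `R` when `R` is a field. -/
def EdgeSeparable (R : Type*) [CommRing R] (G : SimpleGraph V) : Prop :=
  ∀ ⦃a b⦄, G.Adj a b → ∃ w : V → R, IsAlternatingWeight (G.deleteEdges {s(a, b)}) w ∧ w a + w b ≠ 0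

theorem EdgeSeparable.odd_length_of_isCycle (hG : EdgeSeparable R G) {c : G.Walk u u}
    (hc : c.IsCycle) : Odd c.length := by
  cases c with
  | nil => simp at hc
  | cons h p =>
    obtain ⟨w, hw, hne⟩ := hG h
    have hend := hw.apply_eq_neg_one_pow_mul
      (p.toDeleteEdge _ ((Walk.cons_isCycle_iff p h).1 hc).2)
    rw [Walk.length_transfer] at hend
    rw [Walk.length_cons, Nat.odd_add_one, Nat.not_odd_iff_even]
    by_contra hp
    rw [(Nat.not_even_iff_odd.1 hp).neg_one_pow] at hend
    exact hne (by linear_combination hend)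

theorem EdgeSeparable.mem_edges_of_isCycle [NoZeroDivisors R] [NeZero (2 : R)]
    (hG : EdgeSeparable R G) {c : G.Walk x x} {d : G.Walk y y} (hc : c.IsCycle) (hd : d.IsCycle)
    (hxy : G.Reachable x y) {e : Sym2 V} (he : e ∈ d.edges) : e ∈ c.edges := by
  classical
  by_contra hec
  induction e with | h a b
  have hadj := d.adj_of_mem_edges he
  obtain ⟨w, hw, hne⟩ := hG hadj
  have hab := (adj_and_reachable_delete_edges_iff_exists_cycle.2 ⟨y, d, hd, he⟩).2
  have hodd : Odd (c.toDeleteEdge _ hec).length := by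
    rw [Walk.length_transfer]
    exact hG.odd_length_of_isCycle hc
  have hzero {z : V} (hz : G.Reachable x z) : w z = 0 :=
    hw.apply_eq_zero_of_odd_length hodd (reachable_deleteEdges_of_reachable hab hz)
  have ha := hxy.trans ⟨d.takeUntil a (d.fst_mem_support_of_mem_edges he)⟩
  exact hne (by rw [hzero ha, hzero (ha.trans hadj.reachable), add_zero])

theorem CactusLike.reachable_of_isCycle {G' : SimpleGraph V} (hG : CactusLike G) (hle : G' ≤ G)
    {c : G'.Walk x x} {d : G'.Walk y y} (hc : c.IsCycle) (hd : d.IsCycle)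
    (hxy : G.Reachable x y) : G'.Reachable x y := by
  classical
  have hiff := hG.2 x y _ _ (hc.mapLe hle) (hd.mapLe hle) hxy
  simp only [Walk.edges_mapLe_eq_edges] at hiff
  cases c with
  | nil => simp at hc
  | @cons _ z _ h p =>
    have hmem := (hiff s(x, z)).1 (by simp)
    exact .symm ⟨d.takeUntil x (d.fst_mem_support_of_mem_edges hmem)⟩

theorem CactusLike.exists_isAlternatingWeight_of_reachable [IsDomain R] [NeZero (2 : R)]
    (hG : CactusLike G) (hab : G.Adj a b) (hr : (G.deleteEdges {s(a, b)}).Reachable a b) :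
    ∃ w : V → R, IsAlternatingWeight (G.deleteEdges {s(a, b)}) w ∧ w a + w b ≠ 0 := by
  have hle : G.deleteEdges {s(a, b)} ≤ G := G.deleteEdges_le _
  obtain ⟨p, hp⟩ := hr.exists_isPath
  have hpe : s(b, a) ∉ (p.mapLe hle).edges := fun h ↦ by
    rw [Walk.edges_mapLe_eq_edges] at h
    simpa using p.adj_of_mem_edges h
  have hcyc := (Walk.cons_isCycle_iff (p.mapLe hle) hab.symm).2 ⟨hp.mapLe hle, hpe⟩
  have hac : ((G.deleteEdges {s(a, b)}).connectedComponentMk a).toSimpleGraph.IsAcyclic := by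
    by_contra hac
    obtain ⟨x, c, hc, hax⟩ := exists_isCycle_of_not_isAcyclic_toSimpleGraph hac
    have h := (hG.2 b x _ _ hcyc (hc.mapLe hle) (hab.symm.reachable.trans (hax.mono hle))
      s(b, a)).1 (by simp)
    rw [Walk.edges_mapLe_eq_edges] at h
    simpa using c.adj_of_mem_edges h
  obtain ⟨w, hw, hwC⟩ := exists_isAlternatingWeight_of_colorable_two R _ hac.colorable_two
  have heven : Even p.length := by simpa [Nat.odd_add_one] using hG.1 _ _ hcyc
  refine ⟨w, hw, ?_⟩
  rw [hw.apply_eq_neg_one_pow_mul p, heven.neg_one_pow, one_mul, ← two_mul]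
  exact mul_ne_zero two_ne_zero ((hwC a).2 rfl)

theorem CactusLike.exists_isAlternatingWeight_of_not_reachable [Nontrivial R] (hG : CactusLike G)
    (hab : G.Adj a b) (hr : ¬ (G.deleteEdges {s(a, b)}).Reachable a b) :
    ∃ w : V → R, IsAlternatingWeight (G.deleteEdges {s(a, b)}) w ∧ w a + w b ≠ 0 := by
  have hle : G.deleteEdges {s(a, b)} ≤ G := G.deleteEdges_le _
  obtain hac | hac :
      ((G.deleteEdges {s(a, b)}).connectedComponentMk a).toSimpleGraph.IsAcyclic ∨
        ((G.deleteEdges {s(a, b)}).connectedComponentMk b).toSimpleGraph.IsAcyclic := by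
    by_contra! hac
    obtain ⟨x, c, hc, hax⟩ := exists_isCycle_of_not_isAcyclic_toSimpleGraph hac.1
    obtain ⟨y, d, hd, hby⟩ := exists_isCycle_of_not_isAcyclic_toSimpleGraph hac.2
    have hxy : G.Reachable x y :=
      (hax.mono hle).symm.trans (hab.reachable.trans (hby.mono hle))
    exact hr (hax.trans ((hG.reachable_of_isCycle hle hc hd hxy).trans hby.symm))
  · obtain ⟨w, hw, hwC⟩ := exists_isAlternatingWeight_of_colorable_two R _ hac.colorable_two
    have hb : w b = 0 := not_not.1 fun hb ↦ hr (ConnectedComponent.exact ((hwC b).1 hb)).symm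
    exact ⟨w, hw, by rw [hb, add_zero]; exact (hwC a).2 rfl⟩
  · obtain ⟨w, hw, hwC⟩ := exists_isAlternatingWeight_of_colorable_two R _ hac.colorable_two
    have ha : w a = 0 := not_not.1 fun ha ↦ hr (ConnectedComponent.exact ((hwC a).1 ha))
    exact ⟨w, hw, by rw [ha, zero_add]; exact (hwC b).2 rfl⟩

theorem cactusLike_iff_edgeSeparable (R : Type*) [CommRing R] [IsDomain R] [NeZero (2 : R)] :
    CactusLike G ↔ EdgeSeparable R G := by
  refine ⟨fun hG a b hab ↦ ?_, fun hG ↦ ⟨fun _ _ ↦ hG.odd_length_of_isCycle,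
    fun _ _ _ _ hc hd huv _ ↦ ⟨hG.mem_edges_of_isCycle hd hc huv.symm,
      hG.mem_edges_of_isCycle hc hd huv⟩⟩⟩
  by_cases hr : (G.deleteEdges {s(a, b)}).Reachable a b
  · exact hG.exists_isAlternatingWeight_of_reachable hab hr
  · exact hG.exists_isAlternatingWeight_of_not_reachable hab hr

theorem isAlternatingWeight_map_iff {W : Type*} (φ : V ↪ W) {w : W → R} :
    IsAlternatingWeight (G.map φ) w ↔ IsAlternatingWeight G (w ∘ φ) := by
  refine ⟨fun hw x y hxy ↦ hw ((G.map_adj_apply).2 hxy), fun hw x y hxy ↦ ?_⟩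
  obtain ⟨-, x, y, hxy, rfl, rfl⟩ := hxy
  exact hw hxy

theorem map_deleteEdges {W : Type*} (φ : V ↪ W) (s : Set (Sym2 V)) :
    (G.deleteEdges s).map φ = (G.map φ).deleteEdges (Sym2.map φ '' s) := by
  refine edgeSet_injective ?_
  rw [edgeSet_map, edgeSet_deleteEdges, edgeSet_deleteEdges, edgeSet_map,
    image_sdiff φ.sym2Map.injective]
  rfl

theorem edgeSeparable_map_iff {W : Type*} (φ : V ↪ W) :
    EdgeSeparable R (G.map φ) ↔ EdgeSeparable R G := by
  have hdel (a b : V) :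
      (G.map φ).deleteEdges {s(φ a, φ b)} = (G.deleteEdges {s(a, b)}).map φ := by
    rw [map_deleteEdges, image_singleton, Sym2.map_mk]
  constructor
  · intro hG a b hab
    obtain ⟨w, hw, hne⟩ := hG (map_adj_apply.2 hab)
    exact ⟨w ∘ φ, (isAlternatingWeight_map_iff φ).1 (hdel a b ▸ hw), hne⟩
  · rintro hG _ _ ⟨-, a, b, hab, rfl, rfl⟩
    obtain ⟨w, hw, hne⟩ := hG hab
    refine ⟨Function.extend φ w 0, ?_, by simpa [φ.injective.extend_apply] using hne⟩
    rwa [hdel, isAlternatingWeight_map_iff, Function.extend_comp φ.injective]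

end Alternating

section EdgeVec

theorem ncard_setOf_mem_sym2_le {V : Type*} {S : Set (Sym2 V)} (hS : S.Finite) :
    {x | ∃ e ∈ S, x ∈ e}.ncard ≤ 2 * S.ncard := by
  classical
  lift S to Finset (Sym2 V) using hS
  have hU : {x | ∃ e ∈ (S : Set (Sym2 V)), x ∈ e} = ↑(S.biUnion Sym2.toFinset) := by
    ext; simp
  rw [hU, ncard_coe_finset, ncard_coe_finset, mul_comm]
  refine Finset.card_biUnion_le_card_mul _ _ _ fun e _ ↦ ?_
  rw [Sym2.card_toFinset]
  split_ifs <;> simp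

variable {V K : Type*} [DecidableEq V] [Field K] {G : SimpleGraph V}

/-- The vector `e_x + e_y` attached to an edge `s(x, y)`, as a point of `V → K`. -/
def edgeVec (K : Type*) [Field K] : Sym2 V → V → K :=
  Sym2.lift ⟨fun x y ↦ Pi.single x 1 + Pi.single y 1, fun _ _ ↦ add_comm _ _⟩

theorem edgeVec_mk (x y : V) : edgeVec K s(x, y) = Pi.single x 1 + Pi.single y 1 :=
  rfl

theorem edgeVec_apply_ne_zero_iff [NeZero (2 : K)] {e : Sym2 V} {x : V} :
    edgeVec K e x ≠ 0 ↔ x ∈ e := by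
  induction e with | h a b
  have h2 : (1 + 1 : K) ≠ 0 := one_add_one_eq_two (R := K) ▸ two_ne_zero
  simp only [edgeVec_mk, Pi.add_apply, Pi.single_apply, Sym2.mem_iff]
  split_ifs <;> simp_all

theorem edgeVec_injective [NeZero (2 : K)] :
    Function.Injective (edgeVec K : Sym2 V → V → K) := fun e f h ↦
  Sym2.ext fun x ↦ by rw [← edgeVec_apply_ne_zero_iff (K := K), h, edgeVec_apply_ne_zero_iff]

theorem exists_dual_edgeVec (w : V → K) :
    ∃ l : Module.Dual K (V → K), ∀ x y, l (edgeVec K s(x, y)) = w x + w y := by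
  obtain ⟨l, hl⟩ := exists_dual_apply_eq_of_linearIndepOn
    ((Pi.linearIndependent_single_one V K).linearIndepOn univ) w
  exact ⟨l, fun x y ↦ by rw [edgeVec_mk, map_add, hl x (mem_univ x), hl y (mem_univ y)]⟩

theorem linearIndepOn_edgeVec_iff_edgeSeparable :
    LinearIndepOn K (edgeVec K) G.edgeSet ↔ EdgeSeparable K G := by
  rw [linearIndepOn_iff_forall_exists_dual]
  constructor
  · intro h a b hab
    obtain ⟨l, hne, hl⟩ := h s(a, b) hab
    refine ⟨fun x ↦ l (Pi.single x 1), fun x y hxy ↦ ?_, by rwa [← map_add, ← edgeVec_mk]⟩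
    rw [SimpleGraph.deleteEdges_adj] at hxy
    rw [← map_add, ← edgeVec_mk, hl _ hxy.1 hxy.2]
  · intro h e he
    induction e with | h a b
    obtain ⟨w, hw, hne⟩ := h he
    obtain ⟨l, hl⟩ := exists_dual_edgeVec w
    refine ⟨l, by rwa [hl], fun f hf hfe ↦ ?_⟩
    induction f with | h x y
    rw [hl]
    exact hw ((SimpleGraph.deleteEdges_adj).2 ⟨hf, hfe⟩)

theorem linearIndepOn_edgeVec_iff_cactusLike (K : Type*) [Field K] [NeZero (2 : K)]
    (H : G.Subgraph) : LinearIndepOn K (edgeVec K) H.edgeSet ↔ CactusLike H.coe := by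
  rw [cactusLike_iff_edgeSeparable K, ← edgeSeparable_map_iff (.subtype (· ∈ H.verts)),
    ← linearIndepOn_edgeVec_iff_edgeSeparable, ← H.edgeSet_spanningCoe, ← H.spanningCoe_coe]

theorem extremePoints_convexHull_edgeVec :
    (convexHull ℝ (edgeVec ℝ '' G.edgeSet)).extremePoints ℝ = edgeVec ℝ '' G.edgeSet := by
  refine extremePoints_convexHull_subset.antisymm ?_
  have hval : ∀ e ∈ G.edgeSet, ∀ x, edgeVec ℝ e x = 0 ∨ edgeVec ℝ e x = 1 := by
    intro e he x
    induction e with | h a b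
    have hab := G.ne_of_adj he
    simp only [edgeVec_mk, Pi.add_apply, Pi.single_apply]
    grind
  have hcube : convexHull ℝ (edgeVec ℝ '' G.edgeSet) ⊆ univ.pi fun _ ↦ Icc 0 1 := by
    refine convexHull_min ?_ (convex_pi fun _ _ ↦ convex_Icc 0 1)
    rintro _ ⟨e, he, rfl⟩ x -
    obtain h | h := hval e he x <;> simp [h]
  rintro _ ⟨e, he, rfl⟩
  refine inter_extremePoints_subset_extremePoints_of_subset hcube
    ⟨subset_convexHull ℝ _ (mem_image_of_mem _ he), ?_⟩
  rw [extremePoints_pi]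
  exact fun x _ ↦ by simpa [extremePoints_Icc zero_le_one] using hval e he x

variable [Finite V] {k : ℕ}

theorem linearIndepOn_edgeVec_of_forall_isCutOut
    (h : ∀ S ⊆ G.edgeSet, S.ncard ≤ k → IsCutOut (edgeVec ℝ) G.edgeSet S) (H : G.Subgraph)
    (hH : H.verts.ncard ≤ 2 * k) : LinearIndepOn ℝ (edgeVec ℝ) H.edgeSet := by
  classical
  have := Fintype.ofFinite V
  set B : Set (V → ℝ) := (fun x ↦ Pi.single x 1) '' H.verts
  have hrank : Module.finrank ℝ (Submodule.span ℝ B) ≤ 2 * k :=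
    calc Module.finrank ℝ (Submodule.span ℝ B) ≤ B.toFinset.card := finrank_span_le_card B
      _ = B.ncard := (ncard_eq_toFinset_card' B).symm
      _ ≤ H.verts.ncard := ncard_image_le
      _ ≤ 2 * k := hH
  refine linearIndepOn_of_forall_finset_card_le (W := Submodule.span ℝ B) (fun e he ↦ ?_)
    fun T hT hcard ↦ ?_
  · induction e with | h x y
    exact add_mem (Submodule.subset_span (mem_image_of_mem _ (H.edge_vert he)))
      (Submodule.subset_span (mem_image_of_mem _ (H.edge_vert (H.adj_symm he))))
  · have hTG := hT.trans H.edgeSet_subset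
    exact linearIndepOn_of_forall_isCutOut (by lia) fun S hS hk ↦ (h S (hS.trans hTG) hk).mono hTG

theorem isCutOut_edgeVec_of_linearIndepOn {S : Set (Sym2 V)} (hS : S ⊆ G.edgeSet)
    (hli : LinearIndepOn ℝ (edgeVec ℝ)
      ((⊤ : G.Subgraph).induce {x | ∃ e ∈ S, x ∈ e}).edgeSet) :
    IsCutOut (edgeVec ℝ) G.edgeSet S := by
  classical
  set U := {x | ∃ e ∈ S, x ∈ e}
  obtain ⟨l, hl⟩ := exists_dual_apply_eq_of_linearIndepOn hli fun e ↦ if e ∈ S then 0 else -1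
  obtain ⟨B, hB⟩ := (finite_range fun x ↦ l (Pi.single x 1)).bddAbove
  have hlt (x : V) : l (Pi.single x 1) < |B| + 1 :=
    ((hB (mem_range_self x)).trans (le_abs_self B)).trans_lt (lt_add_one _)
  obtain ⟨l', hl'⟩ :=
    exists_dual_edgeVec fun x ↦ if x ∈ U then l (Pi.single x 1) else -(|B| + 1)
  have heq {x y : V} (hxy : G.Adj x y) (hx : x ∈ U) (hy : y ∈ U) :
      l' (edgeVec ℝ s(x, y)) = if s(x, y) ∈ S then 0 else -1 := by
    rw [hl', if_pos hx, if_pos hy, ← map_add, ← edgeVec_mk, hl _ (by simp [hx, hy, hxy])]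
  refine ⟨l', fun e he ↦ ?_, fun e he ↦ ?_⟩ <;> induction e with | h x y
  · rw [heq (hS he) ⟨_, he, Sym2.mem_mk_left x y⟩ ⟨_, he, Sym2.mem_mk_right x y⟩, if_pos he]
  · by_cases hxy : x ∈ U ∧ y ∈ U
    · rw [heq he.1 hxy.1 hxy.2, if_neg he.2]
      exact neg_one_lt_zero
    · rw [hl']
      have := hlt x
      have := hlt y
      have := abs_nonneg B
      grind

end EdgeVec

section EdgePolytope

variable {n k : ℕ} {G : SimpleGraph (Fin n)}

theorem edgePolytope_eq_convexHull : edgePolytope G = convexHull ℝ (edgeVec ℝ '' G.edgeSet) := by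
  have hset : {x | ∃ i j, G.Adj i j ∧ x = Pi.single i 1 + Pi.single j 1} =
      edgeVec ℝ '' G.edgeSet := by
    ext x
    simp [Sym2.exists, edgeVec_mk, eq_comm]
  rw [edgePolytope, hset]

theorem kNeighborly_edgePolytope_iff_isCutOut :
    KNeighborly (edgePolytope G) k ↔
      ∀ S ⊆ G.edgeSet, S.ncard ≤ k → IsCutOut (edgeVec ℝ) G.edgeSet S := by
  obtain ⟨σ, hσ⟩ := exists_dual_edgeVec fun _ : Fin n ↦ (1 / 2 : ℝ)
  have hσ_one : ∀ e ∈ G.edgeSet, σ (edgeVec ℝ e) = 1 := fun e _ ↦ by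
    induction e with | h x y
    rw [hσ, add_halves]
  rw [KNeighborly, edgePolytope_eq_convexHull, extremePoints_convexHull_edgeVec,
    forall_subset_image_iff]
  refine forall₂_congr fun S hS ↦ ?_
  rw [ncard_image_of_injective _ edgeVec_injective, forall_prop_of_true (toFinite _)]
  refine forall_congr' fun _ ↦ ⟨fun ⟨F, hF, hFS⟩ ↦ ?_, fun h ↦ h.exists_isExposed_convexHull hS⟩
  exact isCutOut_of_isExposed_convexHull edgeVec_injective.injOn hS hσ_one hF hFS

theorem kNeighborly_edgePolytope_iff_linearIndepOn :
    KNeighborly (edgePolytope G) k ↔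
      ∀ H : G.Subgraph, H.verts.ncard ≤ 2 * k → LinearIndepOn ℝ (edgeVec ℝ) H.edgeSet := by
  rw [kNeighborly_edgePolytope_iff_isCutOut]
  refine ⟨linearIndepOn_edgeVec_of_forall_isCutOut, fun h S hS hk ↦ ?_⟩
  refine isCutOut_edgeVec_of_linearIndepOn hS (h _ ?_)
  exact (ncard_setOf_mem_sym2_le S.toFinite).trans (Nat.mul_le_mul_left 2 hk)

end EdgePolytope

/-- For `k ≥ 2` and a graph `G` with no isolated vertices and at least `k` edges,
the edge polytope `P(G)` is `k`-neighborly if and only if every subgraph of `G`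
with at most `2k` vertices has only odd cycles and at most one cycle per connected
component. -/
theorem kNeighborly_iff {n k : ℕ} (hk : 2 ≤ k) (G : SimpleGraph (Fin n))
    (hiso : ∀ v : Fin n, ∃ w : Fin n, G.Adj v w)
    (hE : k ≤ G.edgeSet.ncard) :
    KNeighborly (edgePolytope G) k ↔
      ∀ H : G.Subgraph, H.verts.ncard ≤ 2 * k → CactusLike H.coe := by
  simp_rw [← linearIndepOn_edgeVec_iff_cactusLike ℝ]
  exact kNeighborly_edgePolytope_iff_linearIndepOn
end
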